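/- arXiv:2311.08044 — 9 statements merged into one kernel-verified Lean document; each statement's English description precedes it below -/
import Mathlib

section
/- Let (U≥0, U≤0) be a pre-weight structure on a triangulated category T. Then for all integers m ≤ n one has U≥m = U≥n+1 ∗ U[m,n]; that is, an object X of T belongs to U≥m if and only if there is an exact triangle X₁ → X → X₂ → Σ(X₁) with X₁ ∈ U≥n+1 and X₂ ∈ U≥m ∩ U≤n. -/
/-!
The inclusion `⊇` holds because `U≥n+1` and `U[m,n]` both lie in `U≥m` (as `U≥0` is stable under
`Σ⁻¹`), which is closed under extensions. For `⊆`, the decomposition axiom applied to `Σⁿ⁺¹ X`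
and shifted back gives a triangle `A → X → B → ΣA` with `A ∈ U≥n+1` and `B ∈ U≤n`
(`mem_star_geM_leM`). Its rotation `X → B → ΣA → ΣX` exhibits `B` as an extension of
`ΣA ∈ U≥n ⊆ U≥m` by `X ∈ U≥m`, so `B ∈ U≥m` as well.
-/

open CategoryTheory Category Limits Pretriangulated ZeroObject

universe v u

variable {T : Type u} [Category.{v} T] [HasZeroObject T] [HasShift T ℤ] [Preadditive T]
  [∀ n : ℤ, (CategoryTheory.shiftFunctor T n).Additive] [Pretriangulated T]

/-- `Z ∈ star X Y` iff there is a distinguished triangle `A → Z → B → A⟦1⟧`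
with `A ∈ X` and `B ∈ Y`. -/
def star (X Y : Set T) : Set T :=
  {Z | ∃ (A B : T) (f : A ⟶ Z) (g : Z ⟶ B) (h : B ⟶ A⟦(1:ℤ)⟧),
    A ∈ X ∧ B ∈ Y ∧ Triangle.mk f g h ∈ distTriang T}

/-- The cone of `f` lies in `S`. -/
def coneIn {A B : T} (f : A ⟶ B) (S : Set T) : Prop :=
  ∃ (Z : T) (g : B ⟶ Z) (h : Z ⟶ A⟦(1:ℤ)⟧),
    Triangle.mk f g h ∈ (distTriang T) ∧ Z ∈ S

/-- `U≥m = Σ^{-m}(U≥0)`. -/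
def geM (ge : Set T) (m : ℤ) : Set T := {X | X⟦m⟧ ∈ ge}

/-- `U≤m = Σ^{-m}(U≤0)`. -/
def leM (le : Set T) (m : ℤ) : Set T := {X | X⟦m⟧ ∈ le}

/-- `U[m,n] = U≥m ∩ U≤n`. -/
def interval (ge le : Set T) (m n : ℤ) : Set T := geM ge m ∩ leM le n

/-- The core `C = U≥0 ∩ U≤0`. -/
def coreSet (ge le : Set T) : Set T := ge ∩ le

/-- `Σ^{-k}(C)`. -/
def coreShift (ge le : Set T) (k : ℤ) : Set T := {X | X⟦k⟧ ∈ coreSet ge le}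

/-- `U₊ = ⋂ₘ U≥m`. -/
def plusSet (ge : Set T) : Set T := {X | ∀ m : ℤ, X ∈ geM ge m}

/-- `U₋ = ⋂ₘ U≤m`. -/
def minusSet (le : Set T) : Set T := {X | ∀ m : ℤ, X ∈ leM le m}

/-- `U_b = ⋃_{m ≤ n} U[m,n]`. -/
def boundedSet (ge le : Set T) : Set T :=
  {X | ∃ m n : ℤ, m ≤ n ∧ X ∈ interval ge le m n}

/-- A pre-weight structure: a pair of full additive subcategories (given by their
classes of objects, closed under isomorphisms, containing the zero objects and closed
under finite biproducts) with `U≥0 ∗ Σ(U≤0) = T`, `U≥0` closed under `Σ⁻¹` and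
extensions, and `U≤0` closed under `Σ` and extensions. -/
structure IsPreWeightStructure (ge le : Set T) : Prop where
  ge_iso : ∀ ⦃X Y : T⦄, (X ≅ Y) → X ∈ ge → Y ∈ ge
  le_iso : ∀ ⦃X Y : T⦄, (X ≅ Y) → X ∈ le → Y ∈ le
  ge_zero : ∀ Z : T, IsZero Z → Z ∈ ge
  le_zero : ∀ Z : T, IsZero Z → Z ∈ le
  ge_biprod : ∀ ⦃X Y : T⦄ (b : BinaryBicone X Y), b.IsBilimit → X ∈ ge → Y ∈ ge → b.pt ∈ ge
  le_biprod : ∀ ⦃X Y : T⦄ (b : BinaryBicone X Y), b.IsBilimit → X ∈ le → Y ∈ le → b.pt ∈ le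
  decomp : ∀ Z : T, Z ∈ star ge (leM le (-1))
  ge_shiftNeg : ∀ X ∈ ge, X⟦(-1:ℤ)⟧ ∈ ge
  ge_ext : star ge ge ⊆ ge
  le_shiftPos : ∀ X ∈ le, X⟦(1:ℤ)⟧ ∈ le
  le_ext : star le le ⊆ le

lemma star_shift {X Y X' Y' : Set T} (k : ℤ) (hX : ∀ A ∈ X, A⟦k⟧ ∈ X')
    (hY : ∀ B ∈ Y, B⟦k⟧ ∈ Y') {Z : T} (hZ : Z ∈ star X Y) : Z⟦k⟧ ∈ star X' Y' := by
  obtain ⟨A, B, f, g, h, hA, hB, hT⟩ := hZ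
  exact ⟨A⟦k⟧, B⟦k⟧, _, _, _, hX A hA, hY B hB, Triangle.shift_distinguished _ hT k⟩

lemma star_of_iso {X Y : Set T} {Z Z' : T} (e : Z ≅ Z') (hZ : Z ∈ star X Y) :
    Z' ∈ star X Y := by
  obtain ⟨A, B, f, g, h, hA, hB, hT⟩ := hZ
  refine ⟨A, B, f ≫ e.hom, e.inv ≫ g, h, hA, hB, isomorphic_distinguished _ hT _ ?_⟩
  have h₁ : (f ≫ e.hom) ≫ e.inv = 𝟙 A ≫ f := by simp
  have h₂ : (e.inv ≫ g) ≫ 𝟙 B = e.inv ≫ g := by simp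
  have h₃ : h ≫ (shiftFunctor T (1 : ℤ)).map (𝟙 A) = 𝟙 B ≫ h := by simp
  exact Triangle.isoMk _ _ (Iso.refl A) e.symm (Iso.refl B) h₁ h₂ h₃

namespace IsPreWeightStructure

variable {ge le : Set T}

lemma shift_mem_geM (W : IsPreWeightStructure ge le) {X : T} (k m m' : ℤ) (h : k + m' = m)
    (hX : X ∈ geM ge m) : X⟦k⟧ ∈ geM ge m' :=
  W.ge_iso ((shiftFunctorAdd' T k m' m h).app X) hX

lemma shift_mem_leM (W : IsPreWeightStructure ge le) {X : T} (k m m' : ℤ) (h : k + m' = m)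
    (hX : X ∈ leM le m) : X⟦k⟧ ∈ leM le m' :=
  W.le_iso ((shiftFunctorAdd' T k m' m h).app X) hX

lemma geM_antitone (W : IsPreWeightStructure ge le) {m n : ℤ} (hmn : m ≤ n) :
    geM ge n ⊆ geM ge m := by
  induction n, hmn using Int.leInduction with
  | base => exact subset_rfl
  | succ n _ ih =>
    intro X hX
    exact ih (W.ge_iso ((shiftFunctorAdd' T (n + 1) (-1) n (by omega)).app X).symm
      (W.ge_shiftNeg _ hX))

lemma star_geM_subset (W : IsPreWeightStructure ge le) (m : ℤ) :
    star (geM ge m) (geM ge m) ⊆ geM ge m :=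
  fun _ hX => W.ge_ext (star_shift m (fun _ h => h) (fun _ h => h) hX)

/-- The weight decomposition at an arbitrary level: `T = U≥n+1 ∗ U≤n`. -/
lemma mem_star_geM_leM (W : IsPreWeightStructure ge le) (n : ℤ) (X : T) :
    X ∈ star (geM ge (n + 1)) (leM le n) := by
  refine star_of_iso ((shiftFunctorCompIsoId T (n + 1) (-(n + 1)) (by omega)).app X)
    (star_shift (-(n + 1)) (fun A hA => ?_) (fun B hB => ?_) (W.decomp (X⟦n + 1⟧)))
  · exact W.shift_mem_geM _ 0 _ (by omega) (W.ge_iso ((shiftFunctorZero T ℤ).app A).symm hA)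
  · exact W.shift_mem_leM _ (-1) _ (by omega) hB

end IsPreWeightStructure

/-- Lemma 2.4(1): for a pre-weight structure `(U≥0, U≤0)` and `m ≤ n`,
`U≥m = U≥n+1 ∗ U[m,n]`. -/
theorem preWeightStructure_geM_eq_star_interval
    {ge le : Set T} (W : IsPreWeightStructure ge le) (m n : ℤ) (hmn : m ≤ n) :
    geM ge m = star (geM ge (n + 1)) (interval ge le m n) := by
  apply Set.Subset.antisymm
  · intro X hX
    obtain ⟨A, B, f, g, h, hA, hB, hT⟩ := W.mem_star_geM_leM n X
    refine ⟨A, B, f, g, h, hA, ⟨?_, hB⟩, hT⟩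
    exact W.star_geM_subset m ⟨X, A⟦(1:ℤ)⟧, g, h, _, hX,
      W.geM_antitone hmn (W.shift_mem_geM 1 (n + 1) n (by omega) hA), rot_of_distTriang _ hT⟩
  · rintro X ⟨A, B, f, g, h, hA, hB, hT⟩
    exact W.star_geM_subset m ⟨A, B, f, g, h, W.geM_antitone (by omega) hA, hB.1, hT⟩
end

section
/- Let (U≥0, U≤0) be a pre-weight structure on a triangulated category T with core C. Then the smallest triangulated subcategory of T containing C equals U_b; that is, an object of T belongs to U_b if and only if it belongs to every triangulated subcategory of T containing C. -/
/-!
`U_b` is itself a triangulated subcategory containing the core: two intervals `U[m,n]`,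
`U[m',n']` both lie in a common larger interval, and each `U≥m`, `U≤n` is closed under extensions
because shifts of distinguished triangles are distinguished. This gives the inclusion of the
triangulated closure of `C` in `U_b`.

Conversely, let `S` be a triangulated subcategory containing `C`, and after a shift let
`Y ∈ U[-k,0]`. The proof is by induction on `k`; the case `k = 0` is `Y ∈ C`. Otherwise decompose
`Y` as `A → Y → B → ΣA` with `A ∈ U≥0` and `Σ⁻¹B ∈ U≤0`. The triangle `Σ⁻¹B → A → Y` shows
`A ∈ U≤0`, so `A ∈ C`, and the triangle `Σ⁻¹Y → Σ⁻¹B → A` shows that `Σ⁻¹B` has lower bound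
`-(k-1)`. Hence `A` and, by induction, `Σ⁻¹B` lie in `S`, and so does `Y`
(`IsPreWeightStructure.mem_of_width`). The octahedral axiom is not used.
-/

open CategoryTheory Category Limits Pretriangulated ZeroObject

universe v u

variable {T : Type u} [Category.{v} T] [HasZeroObject T] [HasShift T ℤ] [Preadditive T]
  [∀ n : ℤ, (CategoryTheory.shiftFunctor T n).Additive] [Pretriangulated T]

/-- A class of objects defines a (strictly full) triangulated subcategory: it contains the
zero objects, is closed under isomorphisms, under `Σ` and `Σ⁻¹`, and under extensions. -/
def IsTriangulatedSub (S : Set T) : Prop :=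
  (∀ Z : T, IsZero Z → Z ∈ S) ∧
  (∀ ⦃X Y : T⦄, (X ≅ Y) → X ∈ S → Y ∈ S) ∧
  (∀ X ∈ S, X⟦(1:ℤ)⟧ ∈ S) ∧
  (∀ X ∈ S, X⟦(-1:ℤ)⟧ ∈ S) ∧
  star S S ⊆ S

/-- The class `{X | X⟦m⟧ ∈ S}`, which is `U≥m` or `U≤m` for `S = U≥0` or `U≤0`, is closed under
extensions when `S` is. -/
theorem shift_mem_of_ext {S : Set T} (hS : star S S ⊆ S) (m : ℤ) (t : Triangle T)
    (ht : t ∈ distTriang T) (h₁ : t.obj₁⟦m⟧ ∈ S) (h₃ : t.obj₃⟦m⟧ ∈ S) : t.obj₂⟦m⟧ ∈ S :=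
  hS ⟨_, _, _, _, _, h₁, h₃, Triangle.shift_distinguished t ht m⟩

theorem IsPreWeightStructure.geM_anti {ge le : Set T} (W : IsPreWeightStructure ge le) {X : T}
    {m m' : ℤ} (h : m' ≤ m) (hX : X⟦m⟧ ∈ ge) : X⟦m'⟧ ∈ ge := by
  induction m', h using Int.leInductionDown with
  | base => exact hX
  | pred n _ ih =>
    exact W.ge_iso ((shiftFunctorAdd' T n (-1) (n - 1) (by omega)).app X).symm (W.ge_shiftNeg _ ih)

theorem IsPreWeightStructure.leM_mono {ge le : Set T} (W : IsPreWeightStructure ge le) {X : T}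
    {n n' : ℤ} (h : n ≤ n') (hX : X⟦n⟧ ∈ le) : X⟦n'⟧ ∈ le := by
  induction n', h using Int.leInduction with
  | base => exact hX
  | succ n _ ih =>
    exact W.le_iso ((shiftFunctorAdd' T n 1 (n + 1) (by omega)).app X).symm (W.le_shiftPos _ ih)

theorem IsPreWeightStructure.boundedSet_shift {ge le : Set T} (W : IsPreWeightStructure ge le)
    {X : T} (hX : X ∈ boundedSet ge le) (a : ℤ) : X⟦a⟧ ∈ boundedSet ge le := by
  obtain ⟨m, n, hmn, h₁, h₂⟩ := hX
  exact ⟨m - a, n - a, by omega,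
    W.ge_iso ((shiftFunctorAdd' T a (m - a) m (by omega)).app X) h₁,
    W.le_iso ((shiftFunctorAdd' T a (n - a) n (by omega)).app X) h₂⟩

theorem IsPreWeightStructure.boundedSet_isTriangulatedSub {ge le : Set T}
    (W : IsPreWeightStructure ge le) : IsTriangulatedSub (boundedSet ge le) := by
  refine ⟨fun Z hZ => ⟨0, 0, le_rfl, W.ge_zero _ ?_, W.le_zero _ ?_⟩, ?_,
    fun X hX => W.boundedSet_shift hX 1, fun X hX => W.boundedSet_shift hX (-1), ?_⟩
  · exact (shiftFunctor T (0 : ℤ)).map_isZero hZ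
  · exact (shiftFunctor T (0 : ℤ)).map_isZero hZ
  · rintro X Y e ⟨m, n, hmn, h₁, h₂⟩
    exact ⟨m, n, hmn, W.ge_iso ((shiftFunctor T m).mapIso e) h₁,
      W.le_iso ((shiftFunctor T n).mapIso e) h₂⟩
  · rintro Z ⟨A, B, f, g, h, ⟨m, n, hmn, a₁, a₂⟩, ⟨m', n', hmn', b₁, b₂⟩, ht⟩
    refine ⟨min m m', max n n', by omega, ?_, ?_⟩
    · exact shift_mem_of_ext W.ge_ext _ _ ht (W.geM_anti (min_le_left _ _) a₁)
        (W.geM_anti (min_le_right _ _) b₁)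
    · exact shift_mem_of_ext W.le_ext _ _ ht (W.leM_mono (le_max_left _ _) a₂)
        (W.leM_mono (le_max_right _ _) b₂)

/-- Every object of `U[-k,0]` lies in each triangulated subcategory containing the core; the
induction on the width `k` peels off one object of the core at a time. -/
theorem IsPreWeightStructure.mem_of_width {ge le : Set T} (W : IsPreWeightStructure ge le)
    {S : Set T} (hS : IsTriangulatedSub S) (hC : coreSet ge le ⊆ S) (k : ℕ) :
    ∀ Y : T, Y⟦(-k : ℤ)⟧ ∈ ge → Y ∈ le → Y ∈ S := by
  induction k with
  | zero =>
    intro Y h₁ h₂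
    exact hC ⟨W.ge_iso ((shiftFunctorZero' T (-((0 : ℕ) : ℤ)) (by simp)).app Y) h₁, h₂⟩
  | succ k ih =>
    intro Y h₁ h₂
    obtain ⟨A, B, f, g, h, hA, hB, ht⟩ := W.decomp Y
    have ht' := inv_rot_of_distTriang _ ht
    have ht'' := inv_rot_of_distTriang _ ht'
    have hAle : A ∈ le := W.le_ext ⟨_, _, _, _, _, hB, h₂, ht'⟩
    have hY : Y⟦(-1 : ℤ)⟧⟦(-k : ℤ)⟧ ∈ ge :=
      W.ge_iso ((shiftFunctorAdd' T (-1) (-k : ℤ) (-((k + 1 : ℕ) : ℤ))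
        (by push_cast; ring)).app Y) h₁
    have hAk : A⟦(-k : ℤ)⟧ ∈ ge :=
      W.geM_anti (m := 0) (by omega) (W.ge_iso ((shiftFunctorZero T ℤ).app A).symm hA)
    have hBS : B⟦(-1 : ℤ)⟧ ∈ S := ih _ (shift_mem_of_ext W.ge_ext _ _ ht'' hY hAk) hB
    obtain ⟨-, hiso, hpos, -, hext⟩ := hS
    exact hext ⟨_, _, _, _, _, hC ⟨hA, hAle⟩,
      hiso ((shiftFunctorCompIsoId T (-1 : ℤ) 1 (by simp)).app B) (hpos _ hBS), ht⟩

theorem IsTriangulatedSub.mem_of_shift {S : Set T} (hS : IsTriangulatedSub S) {X : T} {n : ℤ}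
    (hX : X⟦n⟧ ∈ S) : X ∈ S := by
  obtain ⟨-, hiso, hpos, hneg, -⟩ := hS
  induction n using Int.induction_on with
  | zero => exact hiso ((shiftFunctorZero T ℤ).app X) hX
  | succ i ih =>
    refine ih (hiso ?_ (hneg _ hX))
    exact ((shiftFunctorAdd' T ((i : ℤ) + 1) (-1) i (by omega)).app X).symm
  | pred i ih =>
    refine ih (hiso ?_ (hpos _ hX))
    exact ((shiftFunctorAdd' T (-(i : ℤ) - 1) 1 (-i) (by omega)).app X).symm

/-- Lemma 2.4(6): the smallest triangulated subcategory containing the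
core `C` equals `U_b`: an object lies in `U_b` iff it lies in every triangulated
subcategory containing `C`. -/
theorem preWeightStructure_boundedSet_eq_tri_core
    {ge le : Set T} (W : IsPreWeightStructure ge le) (X : T) :
    X ∈ boundedSet ge le ↔
      ∀ S : Set T, IsTriangulatedSub S → coreSet ge le ⊆ S → X ∈ S := by
  constructor
  · rintro ⟨m, n, hmn, h₁, h₂⟩ S hS hC
    refine hS.mem_of_shift (n := n) (W.mem_of_width hS hC (n - m).toNat _ ?_ h₂)
    exact W.ge_iso ((shiftFunctorAdd' T n (-((n - m).toNat : ℤ)) m (by omega)).app X) h₁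
  · intro H
    refine H _ W.boundedSet_isTriangulatedSub fun Y hY => ⟨0, 0, le_rfl, ?_, ?_⟩
    · exact W.ge_iso ((shiftFunctorZero T ℤ).app Y).symm hY.1
    · exact W.le_iso ((shiftFunctorZero T ℤ).app Y).symm hY.2
end

section
/- Let (U≥0, U≤0) be a pre-weight structure on a triangulated category T with core C, and let X ∈ U[−n,0] for some n ≥ 0. Then there exists a sequence of morphisms X₀ →^{φ₀} X₁ → ⋯ → X_{n−1} →^{φ_{n−1}} X_n = X such that each X_i ∈ U[−i,0] and the cone of each φ_i lies in Σ^{i+1}(C). -/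
/-!
The filtration is built downwards from `X`. For `X ∈ U[-(k+1),0]`, the `k`-th suspension of a
decomposition of `Σ^{-k} X` is a distinguished triangle `A → X → B → ΣA` with `A ∈ U≥-k` and
`B ∈ U≤-(k+1)`. Closure under extensions supplies the missing bounds: `A` is an extension of
`X ∈ U≤0` by `Σ⁻¹B ∈ U≤-k ⊆ U≤0`, so `A ∈ U[-k,0]`, while `B` is an extension of
`ΣA ∈ U≥-(k+1)` by `X ∈ U≥-(k+1)`, so `B ∈ Σ^{k+1}(C)`. This is `exists_step`; iterating it gives
the theorem.
-/

open CategoryTheory Category Limits Pretriangulated ZeroObject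

universe v u

variable {T : Type u} [Category.{v} T] [HasZeroObject T] [HasShift T ℤ] [Preadditive T]
  [∀ n : ℤ, (CategoryTheory.shiftFunctor T n).Additive] [Pretriangulated T]

/-- Membership in both `geM S m` and `leM S m` unfolds to `X⟦m⟧ ∈ S`, so this computes the effect
of a shift on either class. -/
lemma shift_shift_mem_iff {D : Type*} [Category D] [HasShift D ℤ] {S : Set D}
    (hS : ∀ ⦃X Y : D⦄, (X ≅ Y) → X ∈ S → Y ∈ S)
    (Y : D) (a b c : ℤ) (h : a + b = c) : Y⟦a⟧⟦b⟧ ∈ S ↔ Y⟦c⟧ ∈ S :=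
  ⟨hS ((shiftFunctorAdd' D a b c h).symm.app Y), hS ((shiftFunctorAdd' D a b c h).app Y)⟩

/-- The `k`-th shift of an extension-closed class is extension-closed. -/
lemma mem_of_distTriang {S : Set T} (hS : star S S ⊆ S) {t : Triangle T}
    (ht : t ∈ distTriang T) (k : ℤ) (h₁ : t.obj₁⟦k⟧ ∈ S) (h₃ : t.obj₃⟦k⟧ ∈ S) :
    t.obj₂⟦k⟧ ∈ S :=
  hS ⟨_, _, _, _, _, h₁, h₃, Triangle.shift_distinguished t ht k⟩

/-- The inclusion `U≤-m ⊆ U≤0` for a natural number `m`. -/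
lemma leM_neg_subset {ge le : Set T} (W : IsPreWeightStructure ge le) (m : ℕ) {Y : T}
    (hY : Y⟦-(m : ℤ)⟧ ∈ le) : Y⟦(0 : ℤ)⟧ ∈ le := by
  induction m with
  | zero => simpa using hY
  | succ m ih =>
    refine ih ((shift_shift_mem_iff W.le_iso Y _ 1 _ ?_).1 (W.le_shiftPos _ hY))
    push_cast
    ring

lemma distTriang_replace_obj₂ {A M X B : T} {f : A ⟶ M} {g : M ⟶ B} {h : B ⟶ A⟦(1 : ℤ)⟧}
    (hT : Triangle.mk f g h ∈ distTriang T) (e : M ≅ X) :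
    Triangle.mk (f ≫ e.hom) (e.inv ≫ g) h ∈ distTriang T :=
  isomorphic_distinguished _ hT _
    (Triangle.isoMk _ _ (Iso.refl A) e.symm (Iso.refl B)
      (show (f ≫ e.hom) ≫ e.inv = 𝟙 A ≫ f by simp)
      (show (e.inv ≫ g) ≫ 𝟙 B = e.inv ≫ g by simp)
      (show h ≫ (𝟙 A)⟦(1 : ℤ)⟧' = 𝟙 B ≫ h by simp))

/-- The suspended decomposition of `Σ^{-k} X`. -/
lemma exists_shifted_decomp {ge le : Set T} (W : IsPreWeightStructure ge le) (X : T) (k : ℤ) :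
    ∃ (A B : T) (f : A ⟶ X) (g : X ⟶ B) (h : B ⟶ A⟦(1 : ℤ)⟧),
      Triangle.mk f g h ∈ distTriang T ∧ A⟦-k⟧ ∈ ge ∧ B⟦-(k + 1)⟧ ∈ le := by
  obtain ⟨A, B, f, g, h, hA, hB, hT⟩ := W.decomp (X⟦-k⟧)
  refine ⟨A⟦k⟧, B⟦k⟧, _, _, _, distTriang_replace_obj₂
    (Triangle.shift_distinguished _ hT k)
    ((shiftFunctorCompIsoId T (-k) k (by ring)).app X), ?_, ?_⟩
  · exact W.ge_iso ((shiftFunctorCompIsoId T k (-k) (by ring)).symm.app A) hA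
  · exact (shift_shift_mem_iff W.le_iso B k _ (-1) (by ring)).2 hB

lemma exists_step {ge le : Set T} (W : IsPreWeightStructure ge le) (k : ℕ) (X : T)
    (hX : X ∈ interval ge le (-((k : ℤ) + 1)) 0) :
    ∃ (A : T) (f : A ⟶ X), A ∈ interval ge le (-(k : ℤ)) 0 ∧
      coneIn f (coreShift ge le (-((k : ℤ) + 1))) := by
  obtain ⟨A, B, f, g, h, hT, hA, hB⟩ := exists_shifted_decomp W X k
  refine ⟨A, f, ⟨hA, ?_⟩, B, g, h, hT, ?_, hB⟩
  · refine mem_of_distTriang W.le_ext (inv_rot_of_distTriang _ hT) 0 ?_ hX.2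
    refine leM_neg_subset W k ?_
    exact (shift_shift_mem_iff W.le_iso B (-1) _ _ (by ring)).2 hB
  · refine mem_of_distTriang W.ge_ext (rot_of_distTriang _ hT) _ hX.1 ?_
    exact (shift_shift_mem_iff W.ge_iso A 1 _ _ (by ring)).2 hA

/-- The filtration with the morphisms existentially quantified degree by degree, which lets the
sequence of objects be extended without transporting a dependent family of morphisms. -/
lemma exists_filtration_aux {ge le : Set T} (W : IsPreWeightStructure ge le) (n : ℕ) (X : T)
    (hX : X ∈ interval ge le (-(n : ℤ)) 0) :
    ∃ Xs : ℕ → T, Xs n = X ∧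
      (∀ i : ℕ, i ≤ n → Xs i ∈ interval ge le (-(i : ℤ)) 0) ∧
      (∀ i : ℕ, i < n → ∃ φ : Xs i ⟶ Xs (i + 1),
        coneIn φ (coreShift ge le (-((i : ℤ) + 1)))) := by
  induction n generalizing X with
  | zero =>
    refine ⟨fun _ => X, rfl, fun i hi => ?_, fun i hi => absurd hi (by omega)⟩
    obtain rfl : i = 0 := by omega
    exact hX
  | succ n ih =>
    obtain ⟨A, f, hA, hf⟩ := exists_step W n X (by exact_mod_cast hX)
    obtain ⟨Xs, rfl, hmem, hcone⟩ := ih A hA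
    have hle : ∀ i, i ≤ n → (if i ≤ n then Xs i else X) = Xs i := fun i hi => if_pos hi
    have hlast : (if n + 1 ≤ n then Xs (n + 1) else X) = X := if_neg (by omega)
    refine ⟨fun i => if i ≤ n then Xs i else X, hlast, fun i hi => ?_, fun i hi => ?_⟩
    · dsimp only
      rcases Nat.lt_or_ge n i with h | h
      · obtain rfl : i = n + 1 := by omega
        rw [hlast]
        exact hX
      · rw [hle i h]
        exact hmem i h
    · dsimp only
      rw [hle i (by omega)]
      rcases Nat.lt_or_ge i n with h | h
      · rw [hle (i + 1) h]
        exact hcone i h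
      · obtain rfl : i = n := by omega
        rw [hlast]
        exact ⟨f, hf⟩

/-- Corollary 2.5: if `X ∈ U[-n,0]` then there is a sequence of morphisms
`X₀ → X₁ → ⋯ → Xₙ = X` with `Xᵢ ∈ U[-i,0]` and the cone of each `φᵢ : Xᵢ → Xᵢ₊₁`
lying in `Σ^{i+1}(C)`. -/
theorem preWeightStructure_exists_filtration
    {ge le : Set T} (W : IsPreWeightStructure ge le) (n : ℕ) (X : T)
    (hX : X ∈ interval ge le (-(n : ℤ)) 0) :
    ∃ (Xs : ℕ → T) (φ : ∀ i : ℕ, Xs i ⟶ Xs (i + 1)),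
      Xs n = X ∧
      (∀ i : ℕ, i ≤ n → Xs i ∈ interval ge le (-(i : ℤ)) 0) ∧
      (∀ i : ℕ, i < n → coneIn (φ i) (coreShift ge le (-((i : ℤ) + 1)))) := by
  obtain ⟨Xs, hn, hmem, hcone⟩ := exists_filtration_aux W n X hX
  -- beyond index `n` the morphisms are irrelevant and taken to be zero
  have hφ : ∀ i : ℕ, ∃ φ : Xs i ⟶ Xs (i + 1),
      i < n → coneIn φ (coreShift ge le (-((i : ℤ) + 1))) := fun i => by
    by_cases hi : i < n
    · obtain ⟨φ, h⟩ := hcone i hi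
      exact ⟨φ, fun _ => h⟩
    · exact ⟨0, fun h => absurd h hi⟩
  choose φ hφ using hφ
  exact ⟨Xs, φ, hn, hmem, hφ⟩
end

section
/- Let (U≥0, U≤0) be a pre-weight structure on a triangulated category T whose core C satisfies Hom_T(A, Σ^{−k}(B)) = 0 for all objects A, B ∈ C and all k ≥ 1. Then Hom_T(X, Y) = 0 for every X ∈ U[−n,0] and Y ∈ U[1,m], for all n ≥ 0 and m ≥ 1. -/
/-!
An object of `U[a,b]` with `a < b` sits in a distinguished triangle `A → X → B → A⟦1⟧` with
`A ∈ U[b,b]` and `B ∈ U[a,b-1]` (`exists_peel`): in the triangle obtained from `U≥b ∗ U≤b-1 = T`,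
the object `A` is an extension of `X` by `B⟦-1⟧` and `B` is an extension of `A⟦1⟧` by `X`, so both
satisfy the missing bound. Hence objects of `U[a,b]` are iterated extensions of shifts of
objects of the core. Between objects of `U[a,a]` and `U[c,c]` with `a < c` the hypothesis on the
core says that all morphisms vanish, and vanishing passes to extensions in each variable by the
exactness of `Hom`: first in the target (`hom_zero_of_pure_source`), then in the source
(`hom_zero_of_interval`). The octahedral axiom is not needed.
-/


open CategoryTheory Category Limits Pretriangulated ZeroObject

universe v u

variable {T : Type u} [Category.{v} T] [HasZeroObject T] [HasShift T ℤ] [Preadditive T]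
  [∀ n : ℤ, (CategoryTheory.shiftFunctor T n).Additive] [Pretriangulated T]

section

variable {ge le : Set T}

namespace IsPreWeightStructure

lemma geM_shift (W : IsPreWeightStructure ge le) {X : T} {m k l : ℤ} (h : k + l = m)
    (hX : X ∈ geM ge m) : X⟦k⟧ ∈ geM ge l :=
  W.ge_iso ((shiftFunctorAdd' T k l m h).app X) hX

lemma leM_shift (W : IsPreWeightStructure ge le) {X : T} {m k l : ℤ} (h : k + l = m)
    (hX : X ∈ leM le m) : X⟦k⟧ ∈ leM le l :=
  W.le_iso ((shiftFunctorAdd' T k l m h).app X) hX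

lemma geM_pred (W : IsPreWeightStructure ge le) {X : T} {m l : ℤ} (h : l + 1 = m)
    (hX : X ∈ geM ge m) : X ∈ geM ge l :=
  W.ge_iso ((shiftFunctorAdd' T m (-1) l (by lia)).app X).symm (W.ge_shiftNeg _ hX)

lemma geM_anti_s4 (W : IsPreWeightStructure ge le) {X : T} {m l : ℤ} (h : l ≤ m)
    (hX : X ∈ geM ge m) : X ∈ geM ge l := by
  obtain ⟨k, rfl⟩ := Int.le.dest h
  induction k with
  | zero => simpa using hX
  | succ k ih => exact ih (by lia) (W.geM_pred (by push_cast; ring) hX)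

lemma geM_ext (W : IsPreWeightStructure ge le) (m : ℤ) (t : Triangle T) (ht : t ∈ distTriang T)
    (h₁ : t.obj₁ ∈ geM ge m) (h₃ : t.obj₃ ∈ geM ge m) : t.obj₂ ∈ geM ge m :=
  W.ge_ext ⟨_, _, _, _, _, h₁, h₃, Triangle.shift_distinguished t ht m⟩

lemma leM_ext (W : IsPreWeightStructure ge le) (m : ℤ) (t : Triangle T) (ht : t ∈ distTriang T)
    (h₁ : t.obj₁ ∈ leM le m) (h₃ : t.obj₃ ∈ leM le m) : t.obj₂ ∈ leM le m :=
  W.le_ext ⟨_, _, _, _, _, h₁, h₃, Triangle.shift_distinguished t ht m⟩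

/-- The middle object of a distinguished triangle may be replaced by an isomorphic one. -/
lemma distTriang_of_iso_obj₂ (t : Triangle T) (ht : t ∈ distTriang T) {X : T} (e : t.obj₂ ≅ X) :
    Triangle.mk (t.mor₁ ≫ e.hom) (e.inv ≫ t.mor₂) t.mor₃ ∈ distTriang T := by
  refine isomorphic_distinguished _ ht _
    (Triangle.isoMk _ _ (Iso.refl _) e.symm (Iso.refl _) ?_ ?_ ?_)
  · change (t.mor₁ ≫ e.hom) ≫ e.inv = 𝟙 _ ≫ t.mor₁
    simp
  · change (e.inv ≫ t.mor₂) ≫ 𝟙 _ = e.inv ≫ t.mor₂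
    simp
  · change t.mor₃ ≫ (𝟙 _)⟦(1 : ℤ)⟧' = 𝟙 _ ≫ t.mor₃
    simp

/-- The decomposition axiom shifted: `U≥m ∗ U≤m-1 = T`. -/
lemma exists_decomp (W : IsPreWeightStructure ge le) (X : T) (m : ℤ) :
    ∃ (A B : T) (f : A ⟶ X) (g : X ⟶ B) (h : B ⟶ A⟦(1 : ℤ)⟧),
      A ∈ geM ge m ∧ B ∈ leM le (m - 1) ∧ Triangle.mk f g h ∈ distTriang T := by
  obtain ⟨A, B, f, g, h, hA, hB, ht⟩ := W.decomp (X⟦m⟧)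
  have ht' := Triangle.shift_distinguished _ ht (-m)
  let e : X⟦m⟧⟦-m⟧ ≅ X := (shiftFunctorCompIsoId T m (-m) (by simp)).app X
  let t := (Triangle.shiftFunctor T (-m)).obj (Triangle.mk f g h)
  refine ⟨A⟦-m⟧, B⟦-m⟧, t.mor₁ ≫ e.hom, e.inv ≫ t.mor₂, t.mor₃, ?_, ?_, ?_⟩
  · refine W.geM_shift (m := 0) (by simp) ?_
    exact W.ge_iso ((shiftFunctorZero T ℤ).app A).symm hA
  · exact W.leM_shift (m := -1) (by lia) hB
  · exact distTriang_of_iso_obj₂ t ht' e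

lemma exists_peel (W : IsPreWeightStructure ge le) {X : T} {a b : ℤ} (hab : a < b)
    (hX : X ∈ interval ge le a b) :
    ∃ (A B : T) (f : A ⟶ X) (g : X ⟶ B) (h : B ⟶ A⟦(1 : ℤ)⟧),
      A ∈ interval ge le b b ∧ B ∈ interval ge le a (b - 1) ∧
        Triangle.mk f g h ∈ distTriang T := by
  obtain ⟨A, B, f, g, h, hA, hB, ht⟩ := W.exists_decomp X b
  refine ⟨A, B, f, g, h, ⟨hA, ?_⟩, ⟨?_, hB⟩, ht⟩
  · exact W.leM_ext b _ (inv_rot_of_distTriang _ ht) (W.leM_shift (by lia) hB) hX.2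
  · exact W.geM_ext a _ (rot_of_distTriang _ ht) hX.1
      (W.geM_shift (m := a + 1) (by lia) (W.geM_anti_s4 (by lia) hA))

end IsPreWeightStructure

set_option linter.unusedSectionVars false in
/-- The vanishing condition on the core, transported to morphisms from `U[a,a]` to `U[c,c]`. -/
lemma hom_zero_of_pure
    (hC : ∀ A B : T, A ∈ coreSet ge le → B ∈ coreSet ge le →
      ∀ k : ℕ, 1 ≤ k → ∀ f : A ⟶ B⟦-(k : ℤ)⟧, f = 0)
    {a c : ℤ} (hac : a < c) {X Y : T} (hX : X ∈ interval ge le a a)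
    (hY : Y ∈ interval ge le c c) (f : X ⟶ Y) : f = 0 := by
  obtain ⟨k, rfl⟩ := Int.le.dest hac.le
  let e : Y⟦a⟧ ≅ Y⟦a + (k : ℤ)⟧⟦-(k : ℤ)⟧ :=
    (shiftFunctorAdd' T (a + (k : ℤ)) (-(k : ℤ)) a (by lia)).app Y
  have h := hC _ _ hX hY k (by lia) (f⟦a⟧' ≫ e.hom)
  have h' : f⟦a⟧' = 0 := by
    rw [← cancel_mono e.hom, h, zero_comp]
  exact (shiftFunctor T a).map_injective (by rw [h', Functor.map_zero])

lemma hom_zero_of_pure_source (W : IsPreWeightStructure ge le)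
    (hC : ∀ A B : T, A ∈ coreSet ge le → B ∈ coreSet ge le →
      ∀ k : ℕ, 1 ≤ k → ∀ f : A ⟶ B⟦-(k : ℤ)⟧, f = 0)
    {a c : ℤ} (hac : a < c) {X : T} (hX : X ∈ interval ge le a a) (k : ℕ) :
    ∀ {Y : T}, Y ∈ interval ge le c (c + k) → ∀ f : X ⟶ Y, f = 0 := by
  induction k with
  | zero =>
    intro Y hY f
    exact hom_zero_of_pure hC hac hX (by simpa using hY) f
  | succ k ih =>
    intro Y hY f
    obtain ⟨A, B, p, q, r, hA, hB, ht⟩ := W.exists_peel (by lia) hY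
    have hB' : B ∈ interval ge le c (c + k) := by
      convert hB using 1
      push_cast
      ring_nf
    obtain ⟨g, hg⟩ := Triangle.coyoneda_exact₂ _ ht f (ih hB' _)
    have hg0 : g = 0 := hom_zero_of_pure hC (by lia) hX hA g
    rw [hg, hg0, zero_comp]
    rfl

lemma hom_zero_of_interval (W : IsPreWeightStructure ge le)
    (hC : ∀ A B : T, A ∈ coreSet ge le → B ∈ coreSet ge le →
      ∀ k : ℕ, 1 ≤ k → ∀ f : A ⟶ B⟦-(k : ℤ)⟧, f = 0)
    {a c : ℤ} {k : ℕ} {Y : T} (hY : Y ∈ interval ge le c (c + k)) (n : ℕ) :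
    ∀ {X : T}, a + n < c → X ∈ interval ge le a (a + n) → ∀ f : X ⟶ Y, f = 0 := by
  induction n with
  | zero =>
    intro X h hX f
    exact hom_zero_of_pure_source W hC (a := a) (by simpa using h) (by simpa using hX) k hY f
  | succ n ih =>
    intro X h hX f
    obtain ⟨A, B, p, q, r, hA, hB, ht⟩ := W.exists_peel (by lia) hX
    have hB' : B ∈ interval ge le a (a + n) := by
      convert hB using 1
      push_cast
      ring_nf
    obtain ⟨g, hg⟩ := Triangle.yoneda_exact₂ _ ht f
      (hom_zero_of_pure_source W hC h hA k hY _)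
    have hg0 : g = 0 := ih (by lia) hB' g
    rw [hg, hg0, comp_zero]
    rfl

end

/-- Corollary 2.6: if the core `C` satisfies
`Hom(C, Σ^{-k}(C)) = 0` for all `k ≥ 1`, then `Hom(U[-n,0], U[1,m]) = 0`
for all `n ≥ 0` and `m ≥ 1`. -/
theorem preWeightStructure_hom_vanishing_of_core_vanishing
    {ge le : Set T} (W : IsPreWeightStructure ge le)
    (hC : ∀ A B : T, A ∈ coreSet ge le → B ∈ coreSet ge le →
      ∀ k : ℕ, 1 ≤ k → ∀ f : A ⟶ B⟦-(k : ℤ)⟧, f = 0)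
    (n m : ℕ) (hm : 1 ≤ m) (X Y : T)
    (hX : X ∈ interval ge le (-(n : ℤ)) 0) (hY : Y ∈ interval ge le 1 (m : ℤ))
    (f : X ⟶ Y) : f = 0 := by
  obtain ⟨k, rfl⟩ := Nat.exists_eq_add_of_le hm
  refine hom_zero_of_interval W hC (a := -(n : ℤ)) (c := 1) (k := k) ?_ n (by simp) ?_ f
  · simpa using hY
  · simpa using hX
end

section
/- Let (U≥0, U≤0) be a pre-weight structure on a triangulated category T. If X ∈ U₊ and Y ∈ U₋, then any morphism f : X → Y factors through some object of U_b; that is, there exist an object Z ∈ U_b and morphisms g : X → Z, h : Z → Y with f = h ∘ g. -/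
/-!
Complete `f` to a distinguished triangle `X ⟶ Y ⟶ C ⟶ X⟦1⟧`, decompose `C` by a distinguished
triangle `A ⟶ C ⟶ B` with `A ∈ U≥0`, `B ∈ U≤-1`, and let `Z` be the fibre of `Y ⊞ A ⟶ C`.
Then `f` factors through `Z` (`exists_retract_of_square`).

With the octahedral axiom, `Z` would be an extension of `A` by `X` and also an extension of `Y` by
`B⟦-1⟧`, hence in the core. The category `T` is only assumed to be pretriangulated, so a weaker
substitute is used: `exists_retract_of_square` shows that `Z` is a retract of `X ⊞ Z'`, where `Z'`
is an extension of `A` by `X`, and, by the symmetry of the square, a retract of `B⟦-1⟧ ⊞ Z''`, where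
`Z''` is an extension of `Y` by `B⟦-1⟧`. So `Z` is a retract of an object of `U≥0` and of an
object of `U≤0`.

Neither class need be closed under retracts. However, if `Z` is a retract of `P`, then `Z ⊞ Z⟦1⟧`
is the cone of the complementary idempotent of `P`, so it is an extension of `P⟦1⟧` by `P`
(`biprod_shift_mem_star`). Hence `Z ⊞ Z⟦1⟧` lies in `U[-1,0]`, and `f`, which factors through `Z`,
factors through `Z ⊞ Z⟦1⟧`.
-/

open CategoryTheory Category Limits Pretriangulated ZeroObject

universe v u

variable {T : Type u} [Category.{v} T] [HasZeroObject T] [HasShift T ℤ] [Preadditive T]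
  [∀ n : ℤ, (CategoryTheory.shiftFunctor T n).Additive] [Pretriangulated T]

/-- The fibre `Z` of `(u, a) : Y ⊞ A ⟶ C`, compared with the extension `Z'` of `A` by the fibre `X`
of `u` which is classified by `A ⟶ C ⟶ X⟦1⟧`. The octahedral axiom would make `Z` and `Z'`
isomorphic; without it, `Z` is still a retract of `X ⊞ Z'`. -/
lemma exists_retract_of_square {X Y C A Z : T} {f : X ⟶ Y} {u : Y ⟶ C} {v : C ⟶ X⟦(1:ℤ)⟧}
    (h₁ : Triangle.mk f u v ∈ distTriang T) (a : A ⟶ C)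
    {p : Z ⟶ Y} {q : Z ⟶ A} {w : C ⟶ Z⟦(1:ℤ)⟧}
    (h₂ : Triangle.mk (biprod.lift p q) (biprod.desc u a) w ∈ distTriang T) :
    ∃ (Z' : T) (x : X ⟶ Z') (y : Z' ⟶ A) (k : X ⟶ Z),
      Triangle.mk x y (a ≫ v) ∈ distTriang T ∧ k ≫ p = f ∧ Nonempty (Retract Z (X ⊞ Z')) := by
  obtain ⟨Z', x, y, h₃⟩ := distinguished_cocone_triangle₂ (a ≫ v)
  -- `k` is chosen compatible with both connecting maps, `v ≫ k⟦1⟧ = w`.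
  have hinl : u ≫ 𝟙 C = biprod.inl ≫ biprod.desc u a := by simp
  obtain ⟨k, hk₁, hk₂⟩ : ∃ k : X ⟶ Z, f ≫ biprod.inl = k ≫ biprod.lift p q ∧
      v ≫ k⟦(1:ℤ)⟧' = 𝟙 C ≫ w :=
    complete_distinguished_triangle_morphism₁ _ _ h₁ h₂ biprod.inl (𝟙 C) hinl
  have huv : u ≫ v = 0 := comp_distTriang_mor_zero₂₃ _ h₁
  have hyv : y ≫ a ≫ v = 0 := comp_distTriang_mor_zero₂₃ _ h₃
  have hpq : p ≫ u + q ≫ a = 0 := by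
    have h : biprod.lift p q ≫ biprod.desc u a = 0 := comp_distTriang_mor_zero₁₂ _ h₂
    rwa [biprod.lift_desc] at h
  have hkp : k ≫ p = f := by
    have := hk₁ =≫ biprod.fst
    simpa using this.symm
  have hkq : k ≫ q = 0 := by
    have := hk₁ =≫ biprod.snd
    simpa using this.symm
  have hqav : q ≫ a ≫ v = 0 := by
    rw [← assoc, eq_neg_of_add_eq_zero_right hpq]
    simp [huv]
  obtain ⟨s, hs⟩ : ∃ s : Z ⟶ Z', q = s ≫ y := Triangle.coyoneda_exact₃ _ h₃ q hqav
  obtain ⟨m, hm⟩ : ∃ m : Z' ⟶ Y, y ≫ a = m ≫ u :=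
    Triangle.coyoneda_exact₃ _ h₁ (y ≫ a) ((assoc y a v).trans hyv)
  have hmy : biprod.lift (-m) y ≫ biprod.desc u a = 0 := by simp [hm]
  obtain ⟨t, ht⟩ : ∃ t : Z' ⟶ Z, biprod.lift (-m) y = t ≫ biprod.lift p q :=
    Triangle.coyoneda_exact₂ _ h₂ (biprod.lift (-m) y) hmy
  have htq : t ≫ q = y := by
    have := ht =≫ biprod.snd
    simpa using this.symm
  -- The defect `𝟙 Z - s ≫ t` vanishes on `A`, so it factors through `X ⟶ Z` up to a map killed
  -- by `Z ⟶ Y ⊞ A`.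
  have hdq : (𝟙 Z - s ≫ t) ≫ q = 0 := by simp [htq, ← hs]
  have hdpu : ((𝟙 Z - s ≫ t) ≫ p) ≫ u = 0 := by
    rw [assoc, eq_neg_of_add_eq_zero_left hpq, Preadditive.comp_neg, ← assoc, hdq]
    simp
  obtain ⟨n, hn⟩ : ∃ n : Z ⟶ X, (𝟙 Z - s ≫ t) ≫ p = n ≫ f :=
    Triangle.coyoneda_exact₂ _ h₁ _ hdpu
  have hzero : (𝟙 Z - s ≫ t - n ≫ k) ≫ biprod.lift p q = 0 := by
    ext
    · rw [assoc, biprod.lift_fst, Preadditive.sub_comp, hn, assoc, hkp]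
      simp
    · rw [assoc, biprod.lift_snd, Preadditive.sub_comp, hdq, assoc, hkq]
      simp
  -- That remaining map factors through `C⟦-1⟧ ⟶ Z`, hence through `k` because `v ≫ k⟦1⟧ = w`.
  have hzero' : (𝟙 Z - s ≫ t - n ≫ k)⟦(1:ℤ)⟧' ≫ (biprod.lift p q)⟦(1:ℤ)⟧' = 0 := by
    rw [← Functor.map_comp, hzero, Functor.map_zero]
  obtain ⟨g, hg⟩ : ∃ g : Z⟦(1:ℤ)⟧ ⟶ C, (𝟙 Z - s ≫ t - n ≫ k)⟦(1:ℤ)⟧' = g ≫ w :=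
    Triangle.coyoneda_exact₁ _ h₂ _ hzero'
  obtain ⟨n', hn'⟩ := (shiftFunctor T (1:ℤ)).map_surjective (g ≫ v)
  have hd : 𝟙 Z - s ≫ t - n ≫ k = n' ≫ k := by
    apply (shiftFunctor T (1:ℤ)).map_injective
    rw [hg, Functor.map_comp, hn', assoc, hk₂, id_comp]
  refine ⟨Z', x, y, k, h₃, hkp, ⟨⟨biprod.lift (n + n') s, biprod.desc k t, ?_⟩⟩⟩
  rw [biprod.lift_desc, Preadditive.add_comp, ← hd]
  abel

lemma distinguished_of_isos {A B C A' B' C' : T} {f : A ⟶ B} {g : B ⟶ C} {h : C ⟶ A⟦(1:ℤ)⟧}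
    (hT : Triangle.mk f g h ∈ distTriang T) (e₁ : A ≅ A') (e₂ : B ≅ B') (e₃ : C ≅ C') :
    Triangle.mk (e₁.inv ≫ f ≫ e₂.hom) (e₂.inv ≫ g ≫ e₃.hom) (e₃.inv ≫ h ≫ e₁.hom⟦(1:ℤ)⟧') ∈
      distTriang T := by
  have c₁ : (e₁.inv ≫ f ≫ e₂.hom) ≫ e₂.inv = e₁.inv ≫ f := by simp
  have c₂ : (e₂.inv ≫ g ≫ e₃.hom) ≫ e₃.inv = e₂.inv ≫ g := by simp
  have c₃ : (e₃.inv ≫ h ≫ e₁.hom⟦(1:ℤ)⟧') ≫ e₁.inv⟦(1:ℤ)⟧' = e₃.inv ≫ h := by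
    simp [← Functor.map_comp]
  exact isomorphic_distinguished _ hT _ (Triangle.isoMk _ _ e₁.symm e₂.symm e₃.symm c₁ c₂ c₃)

/-- A product of two objects indexed by `WalkingPair`, as a biproduct. -/
noncomputable def piPairIso (F : WalkingPair → T) :
    (∏ᶜ F) ≅ F WalkingPair.left ⊞ F WalkingPair.right where
  hom := biprod.lift (Pi.π F WalkingPair.left) (Pi.π F WalkingPair.right)
  inv := Pi.lift (fun j => match j with
    | WalkingPair.left => biprod.fst
    | WalkingPair.right => biprod.snd)
  hom_inv_id := by
    apply Limits.Pi.hom_ext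
    rintro (_ | _) <;> simp
  inv_hom_id := by
    ext <;> simp

/-- If `Z` is a retract of `P`, then `Z ⊞ Z⟦1⟧` is an extension of `P⟦1⟧` by `P`: writing
`P ≅ K ⊞ Z`, it is the cone of the projector of `P` onto `K`. -/
lemma biprod_shift_mem_star {Z P : T} (ρ : Retract Z P) :
    ∃ (x : P ⟶ Z ⊞ Z⟦(1:ℤ)⟧) (y : Z ⊞ Z⟦(1:ℤ)⟧ ⟶ P⟦(1:ℤ)⟧) (e : P⟦(1:ℤ)⟧ ⟶ P⟦(1:ℤ)⟧),
      Triangle.mk x y e ∈ distTriang T := by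
  obtain ⟨K, j, d, hK⟩ := distinguished_cocone_triangle₁ ρ.r
  have hd : d = 0 := by
    have h : ρ.r ≫ d = 0 := comp_distTriang_mor_zero₂₃ _ hK
    rw [← id_comp d, ← ρ.retract, assoc, h, comp_zero]
  obtain ⟨(α : P ≅ K ⊞ Z), -, -⟩ := exists_iso_binaryBiproduct_of_distTriang _ hK hd
  -- The triangle on `0 : Z ⟶ Z`, with cone `Z ⊞ Z⟦1⟧`.
  obtain ⟨s, t, hD⟩ : ∃ (s : Z ⟶ Z ⊞ Z⟦(1:ℤ)⟧) (t : Z ⊞ Z⟦(1:ℤ)⟧ ⟶ Z⟦(1:ℤ)⟧),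
      Triangle.mk (0 : Z ⟶ Z) s t ∈ distTriang T := by
    obtain ⟨V, s, t, hV⟩ := distinguished_cocone_triangle (0 : Z ⟶ Z)
    have hzero : -(0 : Z ⟶ Z)⟦(1:ℤ)⟧' = 0 := by rw [Functor.map_zero, neg_zero]
    obtain ⟨(β : V ≅ Z ⊞ Z⟦(1:ℤ)⟧), -, -⟩ :=
      exists_iso_binaryBiproduct_of_distTriang _ (rot_of_distTriang _ hV) hzero
    have h := distinguished_of_isos hV (Iso.refl Z) (Iso.refl Z) β
    rw [zero_comp, comp_zero] at h
    exact ⟨_, _, h⟩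
  let F : WalkingPair → Triangle T := fun i => match i with
    | WalkingPair.left => contractibleTriangle K
    | WalkingPair.right => Triangle.mk (0 : Z ⟶ Z) s t
  have hF : productTriangle F ∈ distTriang T := productTriangle_distinguished F (by
    rintro (_ | _)
    · exact contractible_distinguished K
    · exact hD)
  let e₁ : (productTriangle F).obj₁ ≅ P := piPairIso _ ≪≫ α.symm
  let e₂ : (productTriangle F).obj₂ ≅ P := piPairIso _ ≪≫ α.symm
  let e₃ : (productTriangle F).obj₃ ≅ Z ⊞ Z⟦(1:ℤ)⟧ :=
    piPairIso _ ≪≫ (isoZeroBiprod (isZero_zero T)).symm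
  exact ⟨_, _, _, rot_of_distTriang _ (distinguished_of_isos hF e₁ e₂ e₃)⟩

/-- Lemma 2.8: any morphism from an object of `U₊` to an object of `U₋`
factors through an object of `U_b`. -/
theorem preWeightStructure_factor_through_bounded
    {ge le : Set T} (W : IsPreWeightStructure ge le) (X Y : T)
    (hX : X ∈ plusSet ge) (hY : Y ∈ minusSet le) (f : X ⟶ Y) :
    ∃ (Z : T) (g : X ⟶ Z) (h : Z ⟶ Y), Z ∈ boundedSet ge le ∧ f = g ≫ h := by
  have hX₀ : X ∈ ge := W.ge_iso ((shiftFunctorZero T ℤ).app X) (hX 0)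
  have hY₀ : Y ∈ le := W.le_iso ((shiftFunctorZero T ℤ).app Y) (hY 0)
  obtain ⟨C, u, v, h₁⟩ := distinguished_cocone_triangle f
  obtain ⟨A, B, a, b, c, hA, hB, h₂⟩ := W.decomp C
  have hB₀ : B⟦(-1:ℤ)⟧ ∈ le := hB
  obtain ⟨Z, z, w, h₃⟩ := distinguished_cocone_triangle₁ (biprod.desc u a)
  obtain ⟨p, q, rfl⟩ : ∃ (p : Z ⟶ Y) (q : Z ⟶ A), z = biprod.lift p q :=
    ⟨z ≫ biprod.fst, z ≫ biprod.snd, by ext <;> simp⟩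
  have hbr₁ : biprod.lift q p ≫ (biprod.braiding A Y).hom = 𝟙 Z ≫ biprod.lift p q := by
    ext <;> simp
  have hbr₂ : biprod.desc a u ≫ 𝟙 C = (biprod.braiding A Y).hom ≫ biprod.desc u a := by
    ext <;> simp
  have hbr₃ : w ≫ (𝟙 Z)⟦(1:ℤ)⟧' = 𝟙 C ≫ w := by simp
  have h₃' : Triangle.mk (biprod.lift q p) (biprod.desc a u) w ∈ distTriang T :=
    isomorphic_distinguished _ h₃ _ (Triangle.isoMk _ _ (Iso.refl Z) (biprod.braiding A Y)
      (Iso.refl C) hbr₁ hbr₂ hbr₃)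
  obtain ⟨Z', x, y, k, h₄, hk, ⟨ρ⟩⟩ := exists_retract_of_square h₁ a h₃
  obtain ⟨Z'', x', y', -, h₅, -, ⟨ρ'⟩⟩ :=
    exists_retract_of_square (inv_rot_of_distTriang _ h₂) u h₃'
  have hP : (X ⊞ Z') ∈ ge := W.ge_biprod _ (BinaryBiproduct.isBilimit X Z') hX₀
    (W.ge_ext ⟨_, _, _, _, _, hX₀, hA, h₄⟩)
  have hQ : (B⟦(-1:ℤ)⟧ ⊞ Z'') ∈ le := W.le_biprod _ (BinaryBiproduct.isBilimit _ Z'') hB₀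
    (W.le_ext ⟨_, _, _, _, _, hB₀, hY₀, h₅⟩)
  refine ⟨Z ⊞ Z⟦(1:ℤ)⟧, k ≫ biprod.inl, biprod.fst ≫ p, ⟨-1, 0, by norm_num, ?_, ?_⟩, by simp [hk]⟩
  · obtain ⟨_, _, _, h⟩ := biprod_shift_mem_star ρ
    exact W.ge_ext ⟨_, _, _, _, _, W.ge_shiftNeg _ hP,
      W.ge_iso ((shiftFunctorCompIsoId T (1:ℤ) (-1) (by simp)).symm.app (X ⊞ Z')) hP,
      Triangle.shift_distinguished _ h (-1)⟩
  · obtain ⟨_, _, _, h⟩ := biprod_shift_mem_star ρ'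
    exact W.le_iso ((shiftFunctorZero T ℤ).symm.app _)
      (W.le_ext ⟨_, _, _, _, _, hQ, W.le_shiftPos _ hQ, h⟩)
end

section
/- Suppose the triangulated category T is bi-complete (has arbitrary coproducts and products), the pre-weight structure (U≥0, U≤0) on T is two-sided convergent, and its core C satisfies Hom_T(A, Σ^{−k}(B)) = 0 for all A, B ∈ C and all k ≥ 1. Then Hom_T(X, Y) = 0 for every X ∈ U≤0 and every Y ∈ U≥1. -/
/-!
Both towers are built from finitely many shifts of core objects at each stage, so the orthogonality
of the core propagates through them one variable at a time.

The objects `X` with `Hom(X, B⟦k⟧) = 0` for all `B` in the core and all `k < 0` are closed under extensions, countable coproducts and `⟦1⟧`, and they contain `C⟦m⟧` for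
`m ≥ 0`. Hence they contain every stage of a left tower (`LeftTower.leftOrth_obj`) and its homotopy
colimit (`leftOrth_of_mem_le`), i.e. all of `U≤0`.

Dually, the objects `V` with `Hom(X⟦1⟧, V) = 0` for all `X ∈ U≤0` are closed under extensions,
countable products and `⟦-1⟧` (as `U≤0` is closed under `⟦1⟧`), and by the previous step they
contain `C⟦-m⟧` for `m ≥ 0`. Hence they contain every stage of a right tower
(`RightTower.rightOrth_obj`) and its homotopy limit (`rightOrth_of_mem_ge`), i.e. all of `U≥0`.
Applied to `V = Y⟦1⟧` this is the claim. Since the homotopy (co)limit sits between a (co)product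
and a shift of it, no `lim¹` term survives.
-/

open CategoryTheory Category Limits Pretriangulated ZeroObject

universe v u

variable {T : Type u} [Category.{v} T] [HasZeroObject T] [HasShift T ℤ] [Preadditive T]
  [∀ n : ℤ, (CategoryTheory.shiftFunctor T n).Additive] [Pretriangulated T]

/-- A left tower of `X ∈ U≤0` (Proposition 2.7(1)). -/
structure LeftTower (ge le : Set T) (X : T) where
  obj : ℕ → T
  ι : ∀ n : ℕ, obj n ⟶ X
  φ : ∀ n : ℕ, obj n ⟶ obj (n + 1)
  mem : ∀ n : ℕ, obj n ∈ interval ge le (-(n : ℤ)) 0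
  cone_ι : ∀ n : ℕ, coneIn (ι n) (leM le (-(n : ℤ) - 1))
  cone_φ : ∀ n : ℕ, coneIn (φ n) (coreShift ge le (-((n : ℤ) + 1)))
  comm : ∀ n : ℕ, ι n = φ n ≫ ι (n + 1)

/-- A right tower of `Y ∈ U≥0` (Proposition 2.7(2)). -/
structure RightTower (ge le : Set T) (Y : T) where
  obj : ℕ → T
  π : ∀ n : ℕ, Y ⟶ obj n
  ψ : ∀ n : ℕ, obj (n + 1) ⟶ obj n
  mem : ∀ n : ℕ, obj n ∈ interval ge le 0 (n : ℤ)
  cone_π : ∀ n : ℕ, coneIn (π n) (geM ge (n : ℤ))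
  cone_ψ : ∀ n : ℕ, coneIn (ψ n) (coreShift ge le (n : ℤ))
  comm : ∀ n : ℕ, π n = π (n + 1) ≫ ψ n

section

variable [HasColimitsOfShape (Discrete ℕ) T] [HasLimitsOfShape (Discrete ℕ) T]

/-- The morphism `1 - φ : ∐ Xₙ ⟶ ∐ Xₙ` of a left tower. -/
noncomputable def LeftTower.oneSubPhi {ge le : Set T} {X : T} (tw : LeftTower ge le X) :
    (∐ tw.obj) ⟶ (∐ tw.obj) :=
  Sigma.desc fun n => Sigma.ι tw.obj n - tw.φ n ≫ Sigma.ι tw.obj (n + 1)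

/-- A left tower is convergent if, completing `1 - φ` to an exact triangle
`∐ Xₙ → ∐ Xₙ →^γ hocolim Xₙ → Σ(∐ Xₙ)`, there is an isomorphism
`κ : hocolim Xₙ ≅ X` with `κ ∘ γ ∘ incₙ = ιₙ` for all `n`. -/
def LeftTower.Convergent {ge le : Set T} {X : T} (tw : LeftTower ge le X) : Prop :=
  ∃ (H : T) (γ : (∐ tw.obj) ⟶ H) (δ : H ⟶ (∐ tw.obj)⟦(1:ℤ)⟧),
    Triangle.mk tw.oneSubPhi γ δ ∈ (distTriang T) ∧
    ∃ κ : H ≅ X, ∀ n : ℕ, Sigma.ι tw.obj n ≫ γ ≫ κ.hom = tw.ι n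

/-- The morphism `1 - ψ : ∏ Yₙ ⟶ ∏ Yₙ` of a right tower. -/
noncomputable def RightTower.oneSubPsi {ge le : Set T} {Y : T} (tw : RightTower ge le Y) :
    (∏ᶜ tw.obj) ⟶ (∏ᶜ tw.obj) :=
  Pi.lift fun n => Pi.π tw.obj n - Pi.π tw.obj (n + 1) ≫ tw.ψ n

/-- A right tower is convergent if, completing `1 - ψ` to an exact triangle
`holim Yₙ →^σ ∏ Yₙ → ∏ Yₙ → Σ(holim Yₙ)`, there is an isomorphism
`λ : Y ≅ holim Yₙ` with `prₙ ∘ σ ∘ λ = πₙ` for all `n`. -/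
def RightTower.Convergent {ge le : Set T} {Y : T} (tw : RightTower ge le Y) : Prop :=
  ∃ (H : T) (σ : H ⟶ ∏ᶜ tw.obj) (δ : (∏ᶜ tw.obj) ⟶ H⟦(1:ℤ)⟧),
    Triangle.mk σ tw.oneSubPsi δ ∈ (distTriang T) ∧
    ∃ lam : Y ≅ H, ∀ n : ℕ, lam.hom ≫ σ ≫ Pi.π tw.obj n = tw.π n

/-- The pre-weight structure is left convergent. -/
def LeftConvergent (ge le : Set T) : Prop :=
  ∀ X : T, X ∈ le → ∃ tw : LeftTower ge le X, tw.Convergent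

/-- The pre-weight structure is right convergent. -/
def RightConvergent (ge le : Set T) : Prop :=
  ∀ Y : T, Y ∈ ge → ∃ tw : RightTower ge le Y, tw.Convergent

/-- The pre-weight structure is two-sided convergent. -/
def TwoSidedConvergent (ge le : Set T) : Prop :=
  LeftConvergent ge le ∧ RightConvergent ge le

end

/-- Every morphism `A ⟶ B` vanishes. -/
def HomZero {D : Type u} [Category.{v} D] [HasZeroMorphisms D] (A B : D) : Prop :=
  ∀ f : A ⟶ B, f = 0

lemma HomZero.of_iso {D : Type u} [Category.{v} D] [HasZeroMorphisms D] {A A' B B' : D}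
    (h : HomZero A B) (e : A ≅ A') (e' : B ≅ B') : HomZero A' B' := by
  intro f
  have h0 := h (e.hom ≫ f ≫ e'.inv)
  have h1 : f = e.inv ≫ (e.hom ≫ f ≫ e'.inv) ≫ e'.hom := by simp
  rw [h1, h0]
  simp

lemma HomZero.of_shift {A B : T} (n : ℤ) (h : HomZero (A⟦n⟧) (B⟦n⟧)) : HomZero A B := by
  intro f
  apply (shiftFunctor T n).map_injective
  rw [h ((shiftFunctor T n).map f), Functor.map_zero]

/-- By adjunction of the shifts, `Hom(A, B⟦-n⟧) = 0` gives `Hom(A⟦n⟧, B) = 0`. -/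
lemma HomZero.shift_source {A B : T} {m n : ℤ} (hmn : n + m = 0) (h : HomZero A (B⟦m⟧)) :
    HomZero (A⟦n⟧) B :=
  .of_shift m (h.of_iso ((shiftFunctorCompIsoId T n m hmn).app A).symm (Iso.refl _))

/-- By adjunction of the shifts, `Hom(A⟦n⟧, B) = 0` gives `Hom(A, B⟦-n⟧) = 0`. -/
lemma HomZero.shift_target {A B : T} {m n : ℤ} (hmn : m + n = 0) (h : HomZero (A⟦n⟧) B) :
    HomZero A (B⟦m⟧) :=
  .of_shift n (h.of_iso (Iso.refl _) ((shiftFunctorCompIsoId T m n hmn).app B).symm)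

/-- `X` admits no nonzero morphisms to negative shifts of core objects. -/
def LeftOrth (ge le : Set T) (X : T) : Prop :=
  ∀ B ∈ coreSet ge le, ∀ k : ℤ, k < 0 → HomZero X (B⟦k⟧)

/-- `V` admits no nonzero morphisms from `U≤-1 = U≤0⟦1⟧`. -/
def RightOrth (le : Set T) (V : T) : Prop :=
  ∀ X ∈ le, HomZero (X⟦(1 : ℤ)⟧) V

/-- `LeftOrth` is stable under nonnegative shifts; stated for a desuspension of the object so that
it applies directly to members of `coreShift`. -/
lemma LeftOrth.of_shift {ge le : Set T} {Z : T} {m : ℤ} (hm : m ≤ 0)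
    (h : LeftOrth ge le (Z⟦m⟧)) : LeftOrth ge le Z := fun B hB k hk =>
  .of_shift m ((h B hB (k + m) (by lia)).of_iso (Iso.refl _) (shiftAdd B k m))

lemma LeftOrth.shift_one {ge le : Set T} {X : T} (h : LeftOrth ge le X) :
    LeftOrth ge le (X⟦(1 : ℤ)⟧) := fun B hB k hk =>
  .shift_source (m := -1) (by lia)
    ((h B hB (k + -1) (by lia)).of_iso (Iso.refl _) (shiftAdd B k (-1)))

lemma LeftOrth.sigma [HasColimitsOfShape (Discrete ℕ) T] {ge le : Set T} {X : ℕ → T}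
    (h : ∀ n, LeftOrth ge le (X n)) : LeftOrth ge le (∐ X) := fun B hB k hk f =>
  Sigma.hom_ext _ _ fun n => by rw [h n B hB k hk (Sigma.ι X n ≫ f), comp_zero]

lemma LeftOrth.ext {ge le : Set T} {A X Z : T} {f : A ⟶ X} {g : X ⟶ Z} {h : Z ⟶ A⟦(1 : ℤ)⟧}
    (hT : Triangle.mk f g h ∈ distTriang T) (hA : LeftOrth ge le A) (hZ : LeftOrth ge le Z) :
    LeftOrth ge le X := by
  intro B hB k hk u
  obtain ⟨v, hv⟩ := Triangle.yoneda_exact₂ _ hT u (hA B hB k hk _)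
  rw [hv, hZ B hB k hk v]
  exact comp_zero

lemma RightOrth.shift_neg_one {ge le : Set T} (W : IsPreWeightStructure ge le) {V : T}
    (h : RightOrth le V) : RightOrth le (V⟦(-1 : ℤ)⟧) := fun X hX =>
  .shift_target (by lia) (h _ (W.le_shiftPos X hX))

lemma RightOrth.pi [HasLimitsOfShape (Discrete ℕ) T] {le : Set T} {V : ℕ → T}
    (h : ∀ n, RightOrth le (V n)) : RightOrth le (∏ᶜ V) := fun X hX f =>
  Pi.hom_ext _ _ fun n => by rw [h n X hX (f ≫ Pi.π V n), zero_comp]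

/-- In a triangle `V → A → Z → V⟦1⟧`, right orthogonality passes from `A` and `Z` to `V`. -/
lemma RightOrth.fiber {ge le : Set T} (W : IsPreWeightStructure ge le) {V A Z : T}
    {f : V ⟶ A} {g : A ⟶ Z} {h : Z ⟶ V⟦(1 : ℤ)⟧}
    (hT : Triangle.mk f g h ∈ distTriang T) (hA : RightOrth le A) (hZ : RightOrth le Z) :
    RightOrth le V := by
  intro X hX u
  obtain ⟨v, hv⟩ := Triangle.coyoneda_exact₂ _ (inv_rot_of_distTriang _ hT) u (hA X hX _)
  have h0 : v = 0 := hZ.shift_neg_one W X hX v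
  rw [hv, h0]
  exact zero_comp

lemma IsPreWeightStructure.mem_coreSet {ge le : Set T} (W : IsPreWeightStructure ge le)
    {A : T} {m n : ℤ} (hm : m = 0) (hn : n = 0) (hA : A ∈ interval ge le m n) :
    A ∈ coreSet ge le :=
  ⟨W.ge_iso ((shiftFunctorZero' T m hm).app A) hA.1,
    W.le_iso ((shiftFunctorZero' T n hn).app A) hA.2⟩

/-- Orthogonality of the core passes to every stage of a left tower, which is a finite iterated
extension of objects of `C⟦i⟧` with `i ≥ 0`. -/
lemma LeftTower.leftOrth_obj {ge le : Set T} (W : IsPreWeightStructure ge le)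
    (hcore : ∀ A ∈ coreSet ge le, LeftOrth ge le A) {X : T} (tw : LeftTower ge le X) (n : ℕ) :
    LeftOrth ge le (tw.obj n) := by
  induction n with
  | zero => exact hcore _ (W.mem_coreSet (by simp) rfl (tw.mem 0))
  | succ n ih =>
    obtain ⟨Z, g, h, hT, hZ⟩ := tw.cone_φ n
    exact LeftOrth.ext hT ih (.of_shift (by lia) (hcore _ hZ))

lemma leftOrth_of_mem_le [HasColimitsOfShape (Discrete ℕ) T] {ge le : Set T}
    (W : IsPreWeightStructure ge le) (hconv : LeftConvergent ge le)
    (hcore : ∀ A ∈ coreSet ge le, LeftOrth ge le A) {X : T} (hX : X ∈ le) :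
    LeftOrth ge le X := by
  obtain ⟨tw, H, γ, δ, hT, κ, -⟩ := hconv X hX
  have hsum : LeftOrth ge le (∐ tw.obj) := .sigma (tw.leftOrth_obj W hcore)
  -- The rotated triangle exhibits `H` as an extension of `(∐ Xₙ)⟦1⟧` by `∐ Xₙ`.
  have hH : LeftOrth ge le H := .ext (rot_of_distTriang _ hT) hsum hsum.shift_one
  exact fun B hB k hk => (hH B hB k hk).of_iso κ (Iso.refl _)

/-- Desuspensions of core objects are right orthogonal once `U≤0` is left orthogonal. -/
lemma rightOrth_of_mem_coreShift {ge le : Set T} (hle : ∀ X ∈ le, LeftOrth ge le X)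
    {Z : T} {n : ℤ} (hn : 0 ≤ n) (hZ : Z ∈ coreShift ge le n) : RightOrth le Z := by
  intro X hX
  have h : HomZero X (Z⟦n⟧⟦-n + -1⟧) := hle X hX _ hZ _ (by lia)
  refine .shift_source (m := -1) (by lia) (h.of_iso (Iso.refl _) ?_)
  exact ((shiftFunctorAdd' T n (-n + -1) (-1) (by lia)).app Z).symm

/-- Every stage of a right tower is a finite iterated extension of objects of `C⟦-i⟧`, `i ≥ 0`. -/
lemma RightTower.rightOrth_obj {ge le : Set T} (W : IsPreWeightStructure ge le)
    (hle : ∀ X ∈ le, LeftOrth ge le X) {V : T} (tw : RightTower ge le V) (n : ℕ) :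
    RightOrth le (tw.obj n) := by
  induction n with
  | zero =>
    have h0 := W.mem_coreSet rfl (by simp) (tw.mem 0)
    refine rightOrth_of_mem_coreShift (n := 0) hle le_rfl ?_
    exact ⟨W.ge_iso (shiftZero ℤ _).symm h0.1, W.le_iso (shiftZero ℤ _).symm h0.2⟩
  | succ n ih =>
    obtain ⟨Z, g, h, hT, hZ⟩ := tw.cone_ψ n
    exact RightOrth.fiber W hT ih (rightOrth_of_mem_coreShift hle (by lia) hZ)

lemma rightOrth_of_mem_ge [HasLimitsOfShape (Discrete ℕ) T] {ge le : Set T}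
    (W : IsPreWeightStructure ge le) (hconv : RightConvergent ge le)
    (hle : ∀ X ∈ le, LeftOrth ge le X) {V : T} (hV : V ∈ ge) : RightOrth le V := by
  obtain ⟨tw, H, σ, δ, hT, lam, -⟩ := hconv V hV
  have hprod : RightOrth le (∏ᶜ tw.obj) := .pi (tw.rightOrth_obj W hle)
  exact fun X hX => (RightOrth.fiber W hT hprod hprod X hX).of_iso (Iso.refl _) lam.symm

/-- Proposition 3.5: if `T` is bi-complete, the pre-weight structure
is two-sided convergent and `Hom(C, Σ^{-k}(C)) = 0` for `k ≥ 1`, then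
`Hom(U≤0, U≥1) = 0`. -/
theorem preWeightStructure_hom_vanishing_of_twoSidedConvergent
    [HasCoproducts.{v} T] [HasProducts.{v} T]
    [HasColimitsOfShape (Discrete ℕ) T] [HasLimitsOfShape (Discrete ℕ) T]
    {ge le : Set T} (W : IsPreWeightStructure ge le)
    (hconv : TwoSidedConvergent ge le)
    (hC : ∀ A B : T, A ∈ coreSet ge le → B ∈ coreSet ge le →
      ∀ k : ℕ, 1 ≤ k → ∀ f : A ⟶ B⟦-(k : ℤ)⟧, f = 0)
    (X Y : T) (hX : X ∈ le) (hY : Y ∈ geM ge 1) (f : X ⟶ Y) : f = 0 := by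
  have hcore : ∀ A ∈ coreSet ge le, LeftOrth ge le A := by
    intro A hA B hB k hk
    obtain ⟨n, rfl⟩ : ∃ n : ℕ, k = -(n : ℤ) := ⟨k.natAbs, by lia⟩
    exact hC A B hA hB n (by lia)
  have hle : ∀ X ∈ le, LeftOrth ge le X := fun X hX => leftOrth_of_mem_le W hconv.1 hcore hX
  exact HomZero.of_shift 1 (rightOrth_of_mem_ge W hconv.2 hle hY X hX) f
end

section
/- Let (U≥0, U≤0) be a pre-weight structure on a triangulated category T with core C. Then the following statements are equivalent: (1) Hom_T(X, Y) = 0 for all X ∈ U≥0 and Y ∈ U≤0 (i.e., the pre-weight structure has dimension −1); (2) every object of C is a zero object; (3) U≥0 and U≤0 are triangulated subcategories of T, U≥0 ∗ U≤0 = T, and Hom_T(X, Y) = 0 for all X ∈ U≥0 and Y ∈ U≤0 (i.e., T = ⟨U≤0, U≥0⟩ is a semi-orthogonal decomposition). -/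
/-!
The substantial implication is (2) ⇒ (3): if the core is zero, then `U≥0` and `U≤0` are stable
under all shifts and orthogonal to each other.

*Shifts.* For `X ∈ U≥0`, decompose `ΣX` as `A → ΣX → B` with `A ∈ U≥0`, `Σ⁻¹B ∈ U≤0`. Then `Σ⁻¹B`
is an extension of `A` by `X`, so it lies in the core and vanishes, whence `ΣX ≅ A ∈ U≥0`. A dual
argument gives `Σ⁻¹(U≤0) ⊆ U≤0`.

*Orthogonality.* Given `f : X ⟶ Y` with fibre `D`, decompose `D` as `A → D → B` and let `W` be the
cone of `A → D → X`. Then `W ∈ U≥0` and `f` factors through `W`. With the octahedral axiom, `W`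
would be identified with the fibre `V ∈ U≤0` of `Y → ΣD → ΣB`, so `W` would lie in the core.
The ambient category is only assumed to be pretriangulated, so the octahedral axiom is replaced by
a weaker statement: the identity of `W` factors through a finite direct sum of copies of
`V` and `B`, an object of `U≤0` (`exists_factorization`). So `W` is a retract of some `L ∈ U≤0`. The cone of `1 - e`, where `e` is
the corresponding idempotent of `L`, lies in `U≤0` and is a biproduct of `W` and `ΣW`, hence also
lies in `U≥0`. It is therefore zero, and so is its summand `W` (`isZero_of_retract`).
-/

open CategoryTheory Category Limits Pretriangulated ZeroObject

universe v u

variable {T : Type u} [Category.{v} T] [HasZeroObject T] [HasShift T ℤ] [Preadditive T]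
  [∀ n : ℤ, (CategoryTheory.shiftFunctor T n).Additive] [Pretriangulated T]

/-- If `X` is a retract of `L` and `e` is the corresponding idempotent of `L`, then the cone `N` of
`1 - e` is a biproduct of `X` and `X⟦1⟧`. -/
lemma exists_bicone_cone_of_retract {X L N : T} (i : X ⟶ L) (p : L ⟶ X) (hip : i ≫ p = 𝟙 X)
    (g : L ⟶ N) (h : N ⟶ L⟦(1:ℤ)⟧) (hT : Triangle.mk (𝟙 L - p ≫ i) g h ∈ distTriang T) :
    ∃ b : BinaryBicone X (X⟦(1:ℤ)⟧), b.pt = N ∧ Nonempty b.IsBilimit := by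
  have h12 : (𝟙 L - p ≫ i) ≫ g = 0 := comp_distTriang_mor_zero₁₂ _ hT
  have h23 : g ≫ h = 0 := comp_distTriang_mor_zero₂₃ _ hT
  have h31 : h ≫ (𝟙 L - p ≫ i)⟦(1:ℤ)⟧' = 0 := comp_distTriang_mor_zero₃₁ _ hT
  have hg : p ≫ i ≫ g = g := by
    simp only [Preadditive.sub_comp, id_comp, assoc] at h12
    exact (sub_eq_zero.1 h12).symm
  have hh : h ≫ p⟦(1:ℤ)⟧' ≫ i⟦(1:ℤ)⟧' = h := by
    simp only [Functor.map_sub, Functor.map_comp, CategoryTheory.Functor.map_id,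
      Preadditive.comp_sub, comp_id] at h31
    exact (sub_eq_zero.1 h31).symm
  have hip' : i⟦(1:ℤ)⟧' ≫ p⟦(1:ℤ)⟧' = 𝟙 _ := by
    rw [← Functor.map_comp, hip, CategoryTheory.Functor.map_id]
  obtain ⟨ρ, hρ⟩ : ∃ ρ : N ⟶ X, p = g ≫ ρ :=
    Triangle.yoneda_exact₂ _ hT p (by
      change (𝟙 L - p ≫ i) ≫ p = 0
      simp [hip])
  obtain ⟨σ, hσ⟩ : ∃ σ : X⟦(1:ℤ)⟧ ⟶ N, i⟦(1:ℤ)⟧' = σ ≫ h :=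
    Triangle.coyoneda_exact₁ _ hT (i⟦(1:ℤ)⟧') (by
      change i⟦(1:ℤ)⟧' ≫ (𝟙 L - p ≫ i)⟦(1:ℤ)⟧' = 0
      simp only [Functor.map_sub, Functor.map_comp, CategoryTheory.Functor.map_id,
        Preadditive.comp_sub, comp_id, ← assoc, hip', id_comp, sub_self])
  have higρ : i ≫ g ≫ ρ = 𝟙 X := by rw [← hρ, hip]
  -- The correction term makes the second inclusion orthogonal to the first projection.
  let τ : X⟦(1:ℤ)⟧ ⟶ N := σ - σ ≫ ρ ≫ i ≫ g
  have hτρ : τ ≫ ρ = 0 := by simp [τ, higρ]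
  have hτh : τ ≫ h = i⟦(1:ℤ)⟧' := by simp [τ, h23, hσ]
  let b : BinaryBicone X (X⟦(1:ℤ)⟧) :=
    { pt := N
      fst := ρ
      snd := h ≫ p⟦(1:ℤ)⟧'
      inl := i ≫ g
      inr := τ
      inl_fst := by rw [assoc, higρ]
      inl_snd := by rw [assoc, reassoc_of% h23, zero_comp, comp_zero]
      inr_fst := hτρ
      inr_snd := by rw [reassoc_of% hτh, hip'] }
  refine ⟨b, rfl, ⟨isBinaryBilimitOfTotal b ?_⟩⟩
  change ρ ≫ i ≫ g + (h ≫ p⟦(1:ℤ)⟧') ≫ τ = 𝟙 N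
  -- The defect `x` is idempotent; it factors through `g`, and `g ≫ x = 0`, so it vanishes.
  let x : N ⟶ N := 𝟙 N - ρ ≫ i ≫ g - h ≫ p⟦(1:ℤ)⟧' ≫ τ
  have hxh : x ≫ h = 0 := by
    simp [x, h23, hτh, hh]
  have hgx : g ≫ x = 0 := by
    have : g ≫ ρ ≫ i ≫ g = g := by rw [← reassoc_of% hρ, hg]
    simp [x, this, reassoc_of% h23]
  obtain ⟨y, hy⟩ : ∃ y : N ⟶ L, x = y ≫ g := Triangle.coyoneda_exact₃ _ hT x hxh
  have hxx : x ≫ x = 0 := by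
    nth_rw 1 [hy]
    rw [assoc, hgx, comp_zero]
  have hxρ : x ≫ ρ = 0 := by simp [x, higρ, hτρ]
  have hx : x ≫ x = x := by
    conv_lhs => arg 2; simp only [x]
    simp only [Preadditive.comp_sub, comp_id, reassoc_of% hxρ, reassoc_of% hxh, zero_comp, sub_zero]
  have h0 : x = 0 := hx.symm.trans hxx
  simp only [x, sub_sub, sub_eq_zero] at h0
  rw [assoc, ← h0]

/-- An object `X` of `U≥0` with `X⟦1⟧ ∈ U≥0` that is a retract of an object of `U≤0` is zero if the
core is. -/
lemma IsPreWeightStructure.isZero_of_retract {ge le : Set T} (W : IsPreWeightStructure ge le)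
    (hC : ∀ Z ∈ coreSet ge le, IsZero Z) {X L : T} (hX : X ∈ ge) (hX' : X⟦(1:ℤ)⟧ ∈ ge)
    (hL : L ∈ le) (i : X ⟶ L) (p : L ⟶ X) (hip : i ≫ p = 𝟙 X) : IsZero X := by
  obtain ⟨N, g, h, hT⟩ := distinguished_cocone_triangle (𝟙 L - p ≫ i)
  obtain ⟨b, rfl, ⟨hb⟩⟩ := exists_bicone_cone_of_retract i p hip g h hT
  have hN : IsZero b.pt := hC _ ⟨W.ge_biprod b hb hX hX',
    W.le_ext ⟨L, L⟦(1:ℤ)⟧, g, h, _, hL, W.le_shiftPos _ hL, rot_of_distTriang _ hT⟩⟩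
  rw [IsZero.iff_id_eq_zero, ← b.inl_fst, hN.eq_of_src b.fst 0, comp_zero]

/-- A substitute for the octahedral axiom. Let `D → X → Y` and `A → D → B` be distinguished, let
`W` be the cone of `A → D → X`, and let `B → V → Y` be the triangle with connecting map
`Y → ΣD → ΣB`. Then `f : X ⟶ Y` factors through `X → W`, and the identity of `W` is a sum of a map
through `V` and two maps through `B`. -/
lemma exists_factorization {X Y D A B W V : T}
    {c : D ⟶ X} {f : X ⟶ Y} {δ : Y ⟶ D⟦(1:ℤ)⟧} (h₁ : Triangle.mk c f δ ∈ distTriang T)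
    {a : A ⟶ D} {b : D ⟶ B} {κ : B ⟶ A⟦(1:ℤ)⟧} (h₂ : Triangle.mk a b κ ∈ distTriang T)
    {i : X ⟶ W} {r : W ⟶ A⟦(1:ℤ)⟧} (h₃ : Triangle.mk (a ≫ c) i r ∈ distTriang T)
    {l : B ⟶ V} {s : V ⟶ Y} (h₄ : Triangle.mk l s (δ ≫ b⟦(1:ℤ)⟧') ∈ distTriang T) :
    (∃ w : W ⟶ Y, i ≫ w = f) ∧
    ∃ (p : W ⟶ V) (q : V ⟶ W) (t : W ⟶ B) (k : B ⟶ W) (t' : W ⟶ B) (k' : B ⟶ W),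
      p ≫ q + t ≫ k + t' ≫ k' = 𝟙 W := by
  have hab : a ≫ b = 0 := comp_distTriang_mor_zero₁₂ _ h₂
  have hκa : κ ≫ a⟦(1:ℤ)⟧' = 0 := comp_distTriang_mor_zero₃₁ _ h₂
  have hδc : δ ≫ c⟦(1:ℤ)⟧' = 0 := comp_distTriang_mor_zero₃₁ _ h₁
  have hir : i ≫ r = 0 := comp_distTriang_mor_zero₂₃ _ h₃
  have haci : (a ≫ c) ≫ i = 0 := comp_distTriang_mor_zero₁₂ _ h₃
  have hsδb : s ≫ δ ≫ b⟦(1:ℤ)⟧' = 0 := comp_distTriang_mor_zero₂₃ _ h₄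
  obtain ⟨w, hiw, hrw⟩ : ∃ w : W ⟶ Y, i ≫ w = f ∧ r ≫ a⟦(1:ℤ)⟧' = w ≫ δ := by
    obtain ⟨w, hw₁, hw₂⟩ := complete_distinguished_triangle_morphism _ _ h₃ h₁ a (𝟙 X) (comp_id _)
    exact ⟨w, hw₁.trans (id_comp _), hw₂⟩
  -- `W` is a weak pullback of `ΣA → ΣD ← Y`.
  have lift : ∀ {P : T} (v : P ⟶ Y) (z : P ⟶ A⟦(1:ℤ)⟧), z ≫ a⟦(1:ℤ)⟧' = v ≫ δ →
      ∃ x : P ⟶ W, x ≫ r = z ∧ x ≫ w = v := by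
    intro P v z hz
    obtain ⟨x, hx⟩ : ∃ x : P ⟶ W, z = x ≫ r := Triangle.coyoneda_exact₁ _ h₃ z (by
      change z ≫ (a ≫ c)⟦(1:ℤ)⟧' = 0
      rw [Functor.map_comp, reassoc_of% hz, hδc, comp_zero])
    obtain ⟨u, hu⟩ : ∃ u : P ⟶ X, v - x ≫ w = u ≫ f :=
      Triangle.coyoneda_exact₃ _ h₁ (v - x ≫ w) (by
        change (v - x ≫ w) ≫ δ = 0
        rw [Preadditive.sub_comp, assoc, ← hrw, ← hz, hx, assoc, sub_self])
    refine ⟨x + u ≫ i, ?_, ?_⟩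
    · rw [Preadditive.add_comp, assoc, hir, comp_zero, add_zero, hx]
    · rw [Preadditive.add_comp, assoc, hiw, ← hu, add_sub_cancel]
  obtain ⟨p, hp⟩ : ∃ p : W ⟶ V, w = p ≫ s := Triangle.coyoneda_exact₃ _ h₄ w (by
    change w ≫ δ ≫ b⟦(1:ℤ)⟧' = 0
    rw [← reassoc_of% hrw, ← Functor.map_comp, hab, Functor.map_zero, comp_zero])
  obtain ⟨z, hz⟩ : ∃ z : V ⟶ A⟦(1:ℤ)⟧, z ≫ a⟦(1:ℤ)⟧' = s ≫ δ := by
    obtain ⟨z, hz⟩ : ∃ z : V ⟶ A⟦(1:ℤ)⟧, s ≫ δ = z ≫ (-(a⟦(1:ℤ)⟧')) :=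
      Triangle.coyoneda_exact₁ _ (rot_of_distTriang _ h₂) (s ≫ δ) ((assoc _ _ _).trans hsδb)
    exact ⟨-z, by rw [hz, Preadditive.neg_comp, Preadditive.comp_neg]⟩
  obtain ⟨q, hqr, hqw⟩ := lift s z hz
  obtain ⟨k, hkr, hkw⟩ := lift 0 κ (by rw [hκa, zero_comp])
  obtain ⟨t, ht⟩ : ∃ t : W ⟶ B, r - p ≫ q ≫ r = t ≫ κ :=
    Triangle.coyoneda_exact₁ _ h₂ (r - p ≫ q ≫ r) (by
      change (r - p ≫ q ≫ r) ≫ a⟦(1:ℤ)⟧' = 0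
      rw [Preadditive.sub_comp, hqr, assoc, hrw, hz, ← reassoc_of% hp, sub_self])
  -- An endomorphism of `W` killed by `r` and `w` factors through `B`.
  let x : W ⟶ W := 𝟙 W - p ≫ q - t ≫ k
  have hxr : x ≫ r = 0 := by simp [x, hkr, ← ht]
  have hxw : x ≫ w = 0 := by simp [x, hkw, hqw, ← hp]
  obtain ⟨j, hj⟩ : ∃ j : W ⟶ X, x = j ≫ i := Triangle.coyoneda_exact₃ _ h₃ x hxr
  obtain ⟨d, hd⟩ : ∃ d : W ⟶ D, j = d ≫ c := Triangle.coyoneda_exact₂ _ h₁ j (by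
    change j ≫ f = 0
    rw [← hiw, ← assoc, ← hj, hxw])
  obtain ⟨γ, hγ⟩ : ∃ γ : B ⟶ W, c ≫ i = b ≫ γ :=
    Triangle.yoneda_exact₂ _ h₂ (c ≫ i) ((assoc _ _ _).symm.trans haci)
  refine ⟨⟨w, hiw⟩, p, q, t, k, d ≫ b, γ, ?_⟩
  have hx : x = (d ≫ b) ≫ γ := by rw [hj, hd, assoc, hγ, assoc]
  rw [← hx]
  simp only [x]
  abel

lemma IsPreWeightStructure.mem_le_of_mem_leM {ge le : Set T} (W : IsPreWeightStructure ge le)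
    {B : T} (hB : B ∈ leM le (-1)) : B ∈ le :=
  W.le_iso ((shiftEquiv T (1:ℤ)).counitIso.app B) (W.le_shiftPos _ hB)

lemma IsPreWeightStructure.ge_shiftPos {ge le : Set T} (W : IsPreWeightStructure ge le)
    (hC : ∀ Z ∈ coreSet ge le, IsZero Z) {X : T} (hX : X ∈ ge) : X⟦(1:ℤ)⟧ ∈ ge := by
  obtain ⟨A, B, f, g, h, hA, hB, hT⟩ := W.decomp (X⟦(1:ℤ)⟧)
  have hB' : B⟦(-1:ℤ)⟧ ∈ ge := by
    -- Rotating backwards twice gives `Σ⁻¹ΣX → Σ⁻¹B → A`.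
    have hT' := inv_rot_of_distTriang _ (inv_rot_of_distTriang _ hT)
    exact W.ge_ext ⟨_, _, _, _, _,
      W.ge_iso ((shiftEquiv T (1:ℤ)).unitIso.app X) hX, hA, hT'⟩
  have hB₀ : IsZero (B⟦(-1:ℤ)⟧) := hC _ ⟨hB', hB⟩
  have hB₁ : IsZero B := by
    rw [IsZero.iff_id_eq_zero] at hB₀ ⊢
    apply (shiftFunctor T (-1:ℤ)).map_injective
    rw [CategoryTheory.Functor.map_id, hB₀, Functor.map_zero]
  have : IsIso f := (Triangle.isZero₃_iff_isIso₁ _ hT).1 hB₁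
  exact W.ge_iso (asIso f) hA

lemma IsPreWeightStructure.le_shiftNeg {ge le : Set T} (W : IsPreWeightStructure ge le)
    (hC : ∀ Z ∈ coreSet ge le, IsZero Z) {Y : T} (hY : Y ∈ le) : Y⟦(-1:ℤ)⟧ ∈ le := by
  obtain ⟨A, B, f, g, h, hA, hB, hT⟩ := W.decomp (Y⟦(-1:ℤ)⟧)
  have hB' : B ∈ le := W.mem_le_of_mem_leM hB
  have hA' : A⟦(1:ℤ)⟧ ∈ le := by
    -- Rotating twice gives `B → ΣA → ΣΣ⁻¹Y`.
    have hT' := rot_of_distTriang _ (rot_of_distTriang _ hT)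
    exact W.le_ext ⟨_, _, _, _, _, hB',
      W.le_iso ((shiftEquiv T (1:ℤ)).counitIso.app Y).symm hY, hT'⟩
  have hA₀ : IsZero (A⟦(1:ℤ)⟧) := hC _ ⟨W.ge_shiftPos hC hA, hA'⟩
  have hA₁ : IsZero A := by
    rw [IsZero.iff_id_eq_zero] at hA₀ ⊢
    apply (shiftFunctor T (1:ℤ)).map_injective
    rw [CategoryTheory.Functor.map_id, hA₀, Functor.map_zero]
  have : IsIso g := (Triangle.isZero₁_iff_isIso₂ _ hT).1 hA₁
  exact W.le_iso (asIso g).symm hB'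

lemma IsPreWeightStructure.hom_eq_zero {ge le : Set T} (W : IsPreWeightStructure ge le)
    (hC : ∀ Z ∈ coreSet ge le, IsZero Z) {X Y : T} (hX : X ∈ ge) (hY : Y ∈ le) (f : X ⟶ Y) :
    f = 0 := by
  obtain ⟨D, c, δ, h₁⟩ := distinguished_cocone_triangle₁ f
  obtain ⟨A, B, a, b, κ, hA, hB, h₂⟩ := W.decomp D
  obtain ⟨Q, i, r, h₃⟩ := distinguished_cocone_triangle (a ≫ c)
  obtain ⟨V, l, s, h₄⟩ := distinguished_cocone_triangle₂ (δ ≫ b⟦(1:ℤ)⟧')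
  have hB' : B ∈ le := W.mem_le_of_mem_leM hB
  have hQ : Q ∈ ge :=
    W.ge_ext ⟨_, _, _, _, _, hX, W.ge_shiftPos hC hA, rot_of_distTriang _ h₃⟩
  have hV : V ∈ le := W.le_ext ⟨_, _, _, _, _, hB', hY, h₄⟩
  obtain ⟨⟨w, hw⟩, p, q, t, k, t', k', hid⟩ := exists_factorization h₁ h₂ h₃ h₄
  have hL : ((V ⊞ B) ⊞ B) ∈ le :=
    W.le_biprod _ (BinaryBiproduct.isBilimit _ _)
      (W.le_biprod _ (BinaryBiproduct.isBilimit _ _) hV hB') hB'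
  have hQ₀ : IsZero Q := W.isZero_of_retract hC hQ (W.ge_shiftPos hC hQ) hL
    (biprod.lift (biprod.lift p t) t') (biprod.desc (biprod.desc q k) k') (by simp [hid])
  rw [← hw, hQ₀.eq_of_src w 0, comp_zero]

/-- Lemma 3.9: for a pre-weight structure `(U≥0, U≤0)` with core `C`,
the following are equivalent: (1) `Hom(U≥0, U≤0) = 0` (dimension `-1`);
(2) every object of `C` is zero; (3) `T = ⟨U≤0, U≥0⟩` is a semi-orthogonal
decomposition. -/
theorem preWeightStructure_dim_neg_one_tfae
    {ge le : Set T} (W : IsPreWeightStructure ge le) :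
    List.TFAE
      [ ∀ X ∈ ge, ∀ Y ∈ le, ∀ f : X ⟶ Y, f = 0,
        ∀ Z ∈ coreSet ge le, IsZero Z,
        IsTriangulatedSub ge ∧ IsTriangulatedSub le ∧
          (∀ Z : T, Z ∈ star ge le) ∧
          (∀ X ∈ ge, ∀ Y ∈ le, ∀ f : X ⟶ Y, f = 0) ] := by
  tfae_have 1 → 2 := fun h Z hZ => (IsZero.iff_id_eq_zero Z).2 (h Z hZ.1 Z hZ.2 (𝟙 Z))
  tfae_have 2 → 3 := by
    intro hC
    refine ⟨⟨W.ge_zero, W.ge_iso, fun X hX => W.ge_shiftPos hC hX, W.ge_shiftNeg, W.ge_ext⟩,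
      ⟨W.le_zero, W.le_iso, W.le_shiftPos, fun Y hY => W.le_shiftNeg hC hY, W.le_ext⟩, ?_,
      fun X hX Y hY f => W.hom_eq_zero hC hX hY f⟩
    intro Z
    obtain ⟨A, B, f, g, h, hA, hB, hT⟩ := W.decomp Z
    exact ⟨A, B, f, g, h, hA, W.mem_le_of_mem_leM hB, hT⟩
  tfae_have 3 → 1 := fun h => h.2.2.2
  tfae_finish
end

section
/- Let A be an abelian category and let (D≥0, D≤0) be the canonical pre-weight structure on the unbounded derived category D(A). (i) If Ext^n_A(M, N) ≠ 0 for some objects M, N of A and some n ≥ 1, then there exist X ∈ D≥0 and Y ∈ D≤−n with Hom_{D(A)}(X, Y) ≠ 0; hence the dimension of the canonical pre-weight structure is at least the global dimension of A. (ii) If moreover A has enough projective objects or enough injective objects and Ext^n_A(M, N) = 0 for all objects M, N and all n > d, then Hom_{D(A)}(X, Y) = 0 for all X ∈ D≥0 and all Y ∈ D≤−(d+1); hence the dimension of the canonical pre-weight structure equals the global dimension of A. -/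
/-!
The first part is witnessed by the stalk complexes `M` and `N⟦n⟧` themselves.

The second part rests on one factorization (`exists_fac_singleFunctor`): if `X` has no cohomology
in degrees `< m` and `Y` is concentrated in degrees `≤ m`, then every morphism `X ⟶ Y` in the
derived category factors through a stalk complex in degree `m`.  Indeed, write the morphism as a
roof `X ← X' → Y`.  The chain map `X' → Y` factors through the brutal truncation `σ≤m X'`, because
`Y` vanishes above `m`; and `σ≤m X'` has cohomology only in degree `m`, because `X'` is exact
below `m`.

Given `X` in degrees `≥ 0` and `Y` in degrees `≤ -(d+1)`, using this with `m = -(d+1)` factors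
`X ⟶ Y` through some `N⟦d+1⟧`, and using it again with `m = 0` factors `X ⟶ N⟦d+1⟧` through some
stalk complex `M` in degree `0`. The remaining morphism `M ⟶ N⟦d+1⟧` is an element of
`Ext^(d+1)(M, N) = 0`.
-/

open CategoryTheory Category Limits Pretriangulated ZeroObject

universe v u

variable {T : Type u} [Category.{v} T] [HasZeroObject T] [HasShift T ℤ] [Preadditive T]
  [∀ n : ℤ, (CategoryTheory.shiftFunctor T n).Additive] [Pretriangulated T]

universe w v₂ u₂

variable (A : Type u₂) [Category.{v₂} A] [Abelian A] [HasDerivedCategory.{w} A]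

/-- `D≥0`: objects of the derived category isomorphic to a complex concentrated in
non-negative degrees. -/
def Dge : Set (DerivedCategory A) :=
  {X | ∃ K : CochainComplex A ℤ, (∀ n : ℤ, n < 0 → IsZero (K.X n)) ∧
    Nonempty (X ≅ DerivedCategory.Q.obj K)}

/-- `D≤0`: objects of the derived category isomorphic to a complex concentrated in
non-positive degrees. -/
def Dle : Set (DerivedCategory A) :=
  {X | ∃ K : CochainComplex A ℤ, (∀ n : ℤ, 0 < n → IsZero (K.X n)) ∧
    Nonempty (X ≅ DerivedCategory.Q.obj K)}

section BrutalTruncation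

open ComplexShape

variable {C : Type*} [Category* C] [Abelian C]

/-- Brutal truncation `σ≤m` keeps every degree below `m`, so there is no lower boundary at which
a compatibility has to be checked. -/
lemma hasLift_id_restriction (K : CochainComplex C ℤ) (m : ℤ) :
    (embeddingUpIntLE m).HasLift (𝟙 (K.restriction (embeddingUpIntLE m))) :=
  fun _ hj => hj.false_of_isTruncLE.elim

/-- The canonical projection of a cochain complex onto its brutal truncation `σ≤m`. -/
noncomputable def toBrutalTruncLE (K : CochainComplex C ℤ) (m : ℤ) :
    K ⟶ K.stupidTrunc (embeddingUpIntLE m) :=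
  (embeddingUpIntLE m).liftExtend (𝟙 _) (hasLift_id_restriction K m)

lemma isIso_toBrutalTruncLE_f (K : CochainComplex C ℤ) (m i : ℤ) (hi : i ≤ m) :
    IsIso ((toBrutalTruncLE K m).f i) := by
  obtain ⟨j, hj⟩ := Int.eq_ofNat_of_zero_le (sub_nonneg.2 hi)
  have hj' : (embeddingUpIntLE m).f j = i := by simp; omega
  refine (Embedding.isIso_liftExtend_f_iff _ _ (hasLift_id_restriction K m) hj').2 ?_
  rw [HomologicalComplex.id_f]
  infer_instance

lemma isIso_toBrutalTruncLE (K : CochainComplex C ℤ) (m : ℤ) [K.IsStrictlyLE m] :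
    IsIso (toBrutalTruncLE K m) := by
  have (i : ℤ) : IsIso ((toBrutalTruncLE K m).f i) := by
    by_cases hi : i ≤ m
    · exact isIso_toBrutalTruncLE_f K m i hi
    · exact (K.isZero_of_isStrictlyLE m i (by omega)).isIso
        (CochainComplex.isZero_of_isStrictlyLE (K.stupidTrunc (embeddingUpIntLE m)) m i
          (by omega)) _
  exact HomologicalComplex.Hom.isIso_of_components _

lemma toBrutalTruncLE_naturality {K L : CochainComplex C ℤ} (g : K ⟶ L) (m : ℤ) :
    toBrutalTruncLE K m ≫ HomologicalComplex.stupidTruncMap g (embeddingUpIntLE m) =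
      g ≫ toBrutalTruncLE L m := by
  apply ((embeddingUpIntLE m).homEquiv K (L.restriction (embeddingUpIntLE m))).injective
  apply Subtype.ext
  refine (Embedding.homRestrict_comp_extendMap _ _ _).trans
    (Eq.trans ?_ (Embedding.homRestrict_precomp _ _ _).symm)
  simp [toBrutalTruncLE]

lemma isGE_brutalTruncLE (K : CochainComplex C ℤ) (m : ℤ) [K.IsGE m] :
    CochainComplex.IsGE (K.stupidTrunc (embeddingUpIntLE m)) m := by
  rw [CochainComplex.isGE_iff]
  intro i hi
  have h := K.exactAt_of_isGE m i hi
  rw [HomologicalComplex.exactAt_iff' _ (i - 1) i (i + 1) (by simp) (by simp)] at h ⊢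
  let φ := (HomologicalComplex.shortComplexFunctor' C (up ℤ) (i - 1) i (i + 1)).map
    (toBrutalTruncLE K m)
  have : IsIso φ.τ₁ := isIso_toBrutalTruncLE_f K m _ (by omega)
  have : IsIso φ.τ₂ := isIso_toBrutalTruncLE_f K m _ (by omega)
  have : IsIso φ.τ₃ := isIso_toBrutalTruncLE_f K m _ (by omega)
  exact (ShortComplex.exact_iff_of_epi_of_isIso_of_mono φ).1 h

end BrutalTruncation

variable {A} in
open DerivedCategory in
/-- A morphism from an object without cohomology below degree `m` to a complex concentrated in
degrees `≤ m` factors through a stalk complex in degree `m`. -/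
lemma exists_fac_singleFunctor {X Y : CochainComplex A ℤ} (m : ℤ) [X.IsGE m] [Y.IsStrictlyLE m]
    (f : Q.obj X ⟶ Q.obj Y) :
    ∃ (N : A) (a : Q.obj X ⟶ (singleFunctor A m).obj N)
      (b : (singleFunctor A m).obj N ⟶ Q.obj Y), f = a ≫ b := by
  obtain ⟨X', s, hs, g, rfl⟩ := right_fac f
  have : X'.IsGE m := by
    have : QuasiIso s := (isIso_Q_map_iff_quasiIso _ _).1 hs
    exact (HomologicalComplex.isSupported_iff_of_quasiIso s _).2 inferInstance
  have hW := isGE_brutalTruncLE X' m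
  have := isIso_toBrutalTruncLE Y m
  let W : CochainComplex A ℤ := X'.stupidTrunc (ComplexShape.embeddingUpIntLE m)
  have : (Q.obj W).IsGE m := (isGE_Q_obj_iff _ _).2 hW
  have : (Q.obj W).IsLE m := (isLE_Q_obj_iff _ _).2 (by dsimp [W]; infer_instance)
  obtain ⟨N, ⟨e⟩⟩ := exists_iso_singleFunctor_obj_of_isGE_of_isLE (Q.obj W) m
  refine ⟨N, inv (Q.map s) ≫ Q.map (toBrutalTruncLE X' m) ≫ e.hom,
    e.inv ≫ Q.map (HomologicalComplex.stupidTruncMap g _ ≫ inv (toBrutalTruncLE Y m)), ?_⟩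
  have hg : g = toBrutalTruncLE X' m ≫ HomologicalComplex.stupidTruncMap g _ ≫
      inv (toBrutalTruncLE Y m) := by
    rw [← assoc, toBrutalTruncLE_naturality, assoc, IsIso.hom_inv_id, comp_id]
  conv_lhs => rw [hg]
  simp [W]

/-- Lemma 4.3: (i) if `Ext^n(M,N) ≠ 0` for some `n ≥ 1` (Ext groups
being Hom groups between shifted stalk complexes in the derived category), then
`Hom(D≥0, D≤-n) ≠ 0`; hence the dimension of the canonical pre-weight structure on
`D(A)` is at least the global dimension of `A`.  (ii) If `A` has enough projectives or
enough injectives and `Ext^n(-,-) = 0` for all `n > d`, then `Hom(D≥0, D≤-(d+1)) = 0`;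
hence the two dimensions are equal. -/
theorem derivedCategory_canonical_pws_dimension :
    (∀ (M N : A) (n : ℕ), 1 ≤ n →
      (∃ f : (DerivedCategory.singleFunctor A 0).obj M ⟶
          ((DerivedCategory.singleFunctor A 0).obj N)⟦(n : ℤ)⟧, f ≠ 0) →
      ∃ X ∈ Dge A, ∃ Y ∈ leM (Dle A) (-(n : ℤ)), ∃ f : X ⟶ Y, f ≠ 0) ∧
    ((EnoughProjectives A ∨ EnoughInjectives A) →
      ∀ d : ℕ,
        (∀ (M N : A) (n : ℕ), d < n →
          ∀ f : (DerivedCategory.singleFunctor A 0).obj M ⟶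
            ((DerivedCategory.singleFunctor A 0).obj N)⟦(n : ℤ)⟧, f = 0) →
        ∀ X ∈ Dge A, ∀ Y ∈ leM (Dle A) (-((d : ℤ) + 1)), ∀ f : X ⟶ Y, f = 0) := by
  refine ⟨?_, ?_⟩
  · rintro M N n - ⟨f, hf⟩
    refine ⟨_, ⟨(CochainComplex.singleFunctor A 0).obj M, ?_, ⟨?_⟩⟩, _,
      ⟨(CochainComplex.singleFunctor A 0).obj N, ?_, ⟨?_⟩⟩, f, hf⟩
    · intro i hi
      exact CochainComplex.isZero_of_isStrictlyGE _ 0 i hi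
    · exact (DerivedCategory.singleFunctorIsoCompQ A 0).app M
    · intro i hi
      exact CochainComplex.isZero_of_isStrictlyLE _ 0 i hi
    · exact (shiftShiftNeg _ (n : ℤ)) ≪≫ (DerivedCategory.singleFunctorIsoCompQ A 0).app N
  · rintro - d hd X ⟨K, hK, ⟨eX⟩⟩ Y ⟨L, hL, ⟨eY⟩⟩ f
    have : K.IsStrictlyGE 0 := (CochainComplex.isStrictlyGE_iff _ _).2 hK
    have : L.IsStrictlyLE 0 := (CochainComplex.isStrictlyLE_iff _ _).2 hL
    have : CochainComplex.IsStrictlyLE (L⟦(d : ℤ) + 1⟧) (-((d : ℤ) + 1)) :=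
      L.isStrictlyLE_shift 0 _ _ (by omega)
    have : K.IsGE (-((d : ℤ) + 1)) := K.isGE_of_ge _ 0 (by omega)
    let e : Y ≅ DerivedCategory.Q.obj (L⟦(d : ℤ) + 1⟧) :=
      (shiftNegShift Y ((d : ℤ) + 1)).symm ≪≫ (shiftFunctor _ ((d : ℤ) + 1)).mapIso eY ≪≫
        ((DerivedCategory.Q.commShiftIso ((d : ℤ) + 1)).app L).symm
    obtain ⟨N, a, b, hab⟩ :=
      exists_fac_singleFunctor (-((d : ℤ) + 1)) (eX.inv ≫ f ≫ e.hom)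
    have : CochainComplex.IsStrictlyLE
        ((CochainComplex.singleFunctor A (-((d : ℤ) + 1))).obj N) 0 :=
      CochainComplex.isStrictlyLE_of_le _ (-((d : ℤ) + 1)) 0 (by omega)
    obtain ⟨M, a', b', hab'⟩ := exists_fac_singleFunctor 0
      (a ≫ ((DerivedCategory.singleFunctorIsoCompQ A (-((d : ℤ) + 1))).app N).hom)
    let e' : (DerivedCategory.singleFunctor A (-((d : ℤ) + 1))).obj N ≅
        ((DerivedCategory.singleFunctor A 0).obj N)⟦((d + 1 : ℕ) : ℤ)⟧ :=
      (((DerivedCategory.singleFunctors A).shiftIso ((d + 1 : ℕ) : ℤ)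
        (-((d : ℤ) + 1)) 0 (by simp)).app N).symm
    -- `b'` is, up to isomorphism, an element of `Ext^(d+1)(M, N)`.
    have hb' : b' = 0 := by
      have h := hd M N (d + 1) (by omega) (b' ≫
        ((DerivedCategory.singleFunctorIsoCompQ A (-((d : ℤ) + 1))).app N).inv ≫ e'.hom)
      rw [← assoc] at h
      have h := zero_of_comp_mono _ h
      exact zero_of_comp_mono _ h
    rw [hb', comp_zero] at hab'
    have ha : a = 0 := zero_of_comp_mono _ hab'
    rw [ha, zero_comp] at hab
    exact zero_of_comp_mono _ (zero_of_epi_comp _ hab)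
end

section
/- Let (U≥0, U≤0) be a pre-weight structure on a triangulated category T whose core C satisfies Hom_T(A, Σ^{−k}(B)) = 0 for all A, B ∈ C and all k ≥ 1. Let (F, ω) : T → T be a triangle endofunctor such that there are isomorphisms η_A : F(A) → A for all objects A ∈ C which are natural in A ∈ C. Then F(X) is isomorphic to X for every object X ∈ U_b. -/
/-!
An object of `U[m,n]` with `m < n` sits in a distinguished triangle `X → Z → Y → Σ(X)` with
`X ∈ U[n,n] = Σ⁻ⁿ(C)` and `Y ∈ U[m,n-1]` (`exists_top_decomp`), so bounded objects are iterated
extensions of shifts of core objects. By transport along shifts, `η` gives isomorphisms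
`F(X) ≅ X` on each `Σ⁻ⁿ(C)`, natural there and compatible with `Σ` (`pureIso`,
`pureIso_naturality`, `pureIso_shift`).

The isomorphism `F(Z) ≅ Z` is built by induction on `n - m` (`exists_iso`), from the
isomorphisms for `X` and `Y`, the axiom completing morphisms of triangles and the five lemma.
The point is that the isomorphisms for `X` and `Y` commute with the connecting morphism
`Y → Σ(X)`. If `X' → Y` is the top part of `Y`, then `X'` and `Σ(X)` both lie in `Σ¹⁻ⁿ(C)`, so
commutation holds after restriction to `F(X')` by naturality of `η`. The obstruction thus
factors through `F(Y') ≅ Y'` with `Y' ∈ U[m,n-2]`, and `Hom(Y', Σ(X)) = 0` because negative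
extensions between core objects vanish (`hom_zero`). The octahedral axiom is not needed.
-/


open CategoryTheory Category Limits Pretriangulated ZeroObject

universe v u

variable {T : Type u} [Category.{v} T] [HasZeroObject T] [HasShift T ℤ] [Preadditive T]
  [∀ n : ℤ, (CategoryTheory.shiftFunctor T n).Additive] [Pretriangulated T]

namespace PreWeight

set_option linter.unusedSectionVars false

/-! ### Shifted classes and decompositions -/

section Shifts

variable {ge le : Set T}

lemma mem_shift_iff {S : Set T} (hS : ∀ ⦃X Y : T⦄, (X ≅ Y) → X ∈ S → Y ∈ S)
    (X : T) {a b c : ℤ} (h : a + b = c) : X⟦a⟧⟦b⟧ ∈ S ↔ X⟦c⟧ ∈ S :=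
  ⟨hS ((shiftFunctorAdd' T a b c h).symm.app X), hS ((shiftFunctorAdd' T a b c h).app X)⟩

lemma geM_anti (W : IsPreWeightStructure ge le) {m n : ℤ} (h : m ≤ n) {X : T}
    (hX : X ∈ geM ge n) : X ∈ geM ge m := by
  have key : ∀ (k : ℕ) (m : ℤ), X⟦m + k⟧ ∈ ge → X⟦m⟧ ∈ ge := by
    intro k
    induction k with
    | zero => intro m hm; simpa using hm
    | succ k ih =>
      intro m hm
      refine ih m ?_
      rw [← mem_shift_iff W.ge_iso X (a := m + (k + 1 : ℕ)) (b := -1) (by push_cast; ring)]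
      exact W.ge_shiftNeg _ hm
  obtain ⟨k, rfl⟩ := Int.le.dest h
  exact key k m hX

lemma leM_mono (W : IsPreWeightStructure ge le) {m n : ℤ} (h : m ≤ n) {X : T}
    (hX : X ∈ leM le m) : X ∈ leM le n := by
  have key : ∀ (k : ℕ) (m : ℤ), X⟦m⟧ ∈ le → X⟦m + k⟧ ∈ le := by
    intro k
    induction k with
    | zero => intro m hm; simpa using hm
    | succ k ih =>
      intro m hm
      rw [← mem_shift_iff W.le_iso X (a := m + k) (b := 1) (by push_cast; ring)]
      exact W.le_shiftPos _ (ih m hm)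
  obtain ⟨k, rfl⟩ := Int.le.dest h
  exact key k m hX

lemma ext_shift {S : Set T} (hS : star S S ⊆ S) {m : ℤ} {t : Triangle T}
    (ht : t ∈ distTriang T) (h₁ : t.obj₁⟦m⟧ ∈ S) (h₃ : t.obj₃⟦m⟧ ∈ S) : t.obj₂⟦m⟧ ∈ S :=
  hS ⟨_, _, _, _, _, h₁, h₃, Triangle.shift_distinguished t ht m⟩

lemma exists_decomp (W : IsPreWeightStructure ge le) (Z : T) (n : ℤ) :
    ∃ (X Y : T) (f : X ⟶ Z) (g : Z ⟶ Y) (h : Y ⟶ X⟦(1 : ℤ)⟧),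
      X ∈ geM ge n ∧ Y ∈ leM le (n - 1) ∧ Triangle.mk f g h ∈ distTriang T := by
  obtain ⟨A, B, f, g, h, hA, hB, ht⟩ := W.decomp (Z⟦n⟧)
  have ht' := Triangle.shift_distinguished _ ht (-n)
  let t := (CategoryTheory.shiftFunctor (Triangle T) (-n)).obj (Triangle.mk f g h)
  let e : t.obj₂ ≅ Z := shiftShiftNeg Z n
  refine ⟨t.obj₁, t.obj₃, t.mor₁ ≫ e.hom, e.inv ≫ t.mor₂, t.mor₃, ?_, ?_, ?_⟩
  · exact W.ge_iso (shiftNegShift A n).symm hA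
  · exact (mem_shift_iff W.le_iso B (by ring)).2 hB
  · refine isomorphic_distinguished _ ht' _ ?_
    refine Triangle.isoMk _ _ (Iso.refl t.obj₁) e.symm (Iso.refl t.obj₃) ?_ ?_ ?_
    · change (t.mor₁ ≫ e.hom) ≫ e.inv = 𝟙 t.obj₁ ≫ t.mor₁
      simp
    · change (e.inv ≫ t.mor₂) ≫ 𝟙 t.obj₃ = e.inv ≫ t.mor₂
      simp
    · change t.mor₃ ≫ (𝟙 t.obj₁)⟦(1 : ℤ)⟧' = 𝟙 t.obj₃ ≫ t.mor₃
      simp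

/-- An object of `U[m,n]`, `m < n`, is an extension of an object of `U[m,n-1]` by an object
of `U[n,n]`. -/
lemma exists_top_decomp (W : IsPreWeightStructure ge le) {m n : ℤ} (hmn : m < n) {Z : T}
    (hZ : Z ∈ interval ge le m n) :
    ∃ (X Y : T) (f : X ⟶ Z) (g : Z ⟶ Y) (h : Y ⟶ X⟦(1 : ℤ)⟧),
      X ∈ interval ge le n n ∧ Y ∈ interval ge le m (n - 1) ∧
        Triangle.mk f g h ∈ distTriang T := by
  obtain ⟨X, Y, f, g, h, hX, hY, ht⟩ := exists_decomp W Z n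
  refine ⟨X, Y, f, g, h, ⟨hX, ?_⟩, ⟨?_, hY⟩, ht⟩
  · refine ext_shift W.le_ext (inv_rot_of_distTriang _ ht) (m := n) ?_ hZ.2
    exact (mem_shift_iff W.le_iso Y (a := -1) (b := n) (by ring)).2 hY
  · refine ext_shift W.ge_ext (rot_of_distTriang _ ht) (m := m) hZ.1 ?_
    exact (mem_shift_iff W.ge_iso X (a := 1) (b := m) rfl).2 (geM_anti W (by omega) hX)

end Shifts

/-! ### Vanishing of morphisms -/

lemma hom_zero_of_pure {ge le : Set T}
    (hC : ∀ A B : T, A ∈ coreSet ge le → B ∈ coreSet ge le →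
      ∀ k : ℕ, 1 ≤ k → ∀ f : A ⟶ B⟦-(k : ℤ)⟧, f = 0)
    {n N : ℤ} (hN : n + 2 ≤ N) {Y B : T} (hY : Y ∈ interval ge le n n)
    (hB : B ∈ interval ge le N N) (g : Y ⟶ B⟦(1 : ℤ)⟧) : g = 0 := by
  obtain ⟨k, hk⟩ : ∃ k : ℕ, (k : ℤ) = N - 1 - n := ⟨(N - 1 - n).toNat, by omega⟩
  apply (shiftFunctor T n).map_injective
  rw [Functor.map_zero]
  -- `Σⁿ(ΣB)` and `Σ⁻ᵏ(Σᴺ B)` are both `Σⁿ⁺¹ B`.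
  let e : (B⟦(1 : ℤ)⟧)⟦n⟧ ≅ (B⟦N⟧)⟦-(k : ℤ)⟧ :=
    (shiftFunctorAdd' T 1 n (n + 1) (by ring)).symm.app B ≪≫
      (shiftFunctorAdd' T N (-(k : ℤ)) (n + 1) (by omega)).app B
  rw [← cancel_mono e.hom, zero_comp]
  exact hC _ _ hY hB k (by omega) _

lemma hom_zero {ge le : Set T} (W : IsPreWeightStructure ge le)
    (hC : ∀ A B : T, A ∈ coreSet ge le → B ∈ coreSet ge le →
      ∀ k : ℕ, 1 ≤ k → ∀ f : A ⟶ B⟦-(k : ℤ)⟧, f = 0) {N : ℤ} {B : T}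
    (hB : B ∈ interval ge le N N) (k : ℕ) :
    ∀ {n : ℤ}, n + 2 ≤ N → ∀ {Y : T}, Y ∈ interval ge le (n - k) n →
      ∀ g : Y ⟶ B⟦(1 : ℤ)⟧, g = 0 := by
  induction k with
  | zero =>
    intro n hn Y hY g
    exact hom_zero_of_pure hC hn (by simpa using hY) hB g
  | succ k ih =>
    intro n hn Y hY g
    obtain ⟨X, Y', a, b, c, hX, hY', ht⟩ := exists_top_decomp W (by omega) hY
    obtain ⟨g', hg'⟩ := Triangle.yoneda_exact₂ _ ht g (hom_zero_of_pure hC hn hX hB _)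
    rw [show n - ((k + 1 : ℕ) : ℤ) = (n - 1) - k by push_cast; ring] at hY'
    rw [hg']
    exact (congrArg (b ≫ ·) (ih (by omega) hY' g')).trans comp_zero

/-! ### Extending `η` to the shifts of the core -/

section Functor

variable {ge le : Set T} (F : T ⥤ T) [F.CommShift ℤ]
  (η : ∀ (A : T), A ∈ coreSet ge le → (F.obj A ≅ A))

/-- The isomorphism `F(X) ≅ X` for `X ∈ U[n,n] = Σ⁻ⁿ(C)`, characterised by the fact that its
`n`-th shift is `η` on `Σⁿ X`, up to the identification `Σⁿ F(X) ≅ F(Σⁿ X)`. -/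
noncomputable def pureIso (n : ℤ) (X : T) (hX : X ∈ interval ge le n n) : F.obj X ≅ X :=
  (shiftFunctor T n).preimageIso ((F.commShiftIso n).symm.app X ≪≫ η (X⟦n⟧) hX)

lemma shift_pureIso_hom (n : ℤ) (X : T) (hX : X ∈ interval ge le n n) :
    (pureIso F η n X hX).hom⟦n⟧' = (F.commShiftIso n).inv.app X ≫ (η (X⟦n⟧) hX).hom := by
  simp [pureIso]

variable (hη : ∀ (A B : T) (hA : A ∈ coreSet ge le) (hB : B ∈ coreSet ge le) (f : A ⟶ B),
  F.map f ≫ (η B hB).hom = (η A hA).hom ≫ f)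
include hη

lemma pureIso_naturality {n : ℤ} {X Y : T} (hX : X ∈ interval ge le n n)
    (hY : Y ∈ interval ge le n n) (f : X ⟶ Y) :
    F.map f ≫ (pureIso F η n Y hY).hom = (pureIso F η n X hX).hom ≫ f := by
  apply (shiftFunctor T n).map_injective
  rw [Functor.map_comp, Functor.map_comp, shift_pureIso_hom, shift_pureIso_hom,
    F.commShiftIso_inv_naturality_assoc, hη _ _ hX hY, assoc]

/-- The isomorphisms `pureIso` for different `n` are compatible with `Σ`, via the
commutation isomorphism `ω : FΣ ≅ ΣF`. -/
lemma pureIso_shift {n n' : ℤ} (h : 1 + n' = n) {X : T} (hX : X ∈ interval ge le n n)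
    (hX' : X⟦(1 : ℤ)⟧ ∈ interval ge le n' n') :
    (pureIso F η n' (X⟦(1 : ℤ)⟧) hX').hom =
      (F.commShiftIso (1 : ℤ)).hom.app X ≫ (pureIso F η n X hX).hom⟦(1 : ℤ)⟧' := by
  apply (shiftFunctor T n').map_injective
  have hnat := (shiftFunctorAdd' T 1 n' n h).inv.naturality (pureIso F η n X hX).hom
  have hη' := hη _ _ hX hX' ((shiftFunctorAdd' T 1 n' n h).hom.app X)
  have hadd := NatTrans.congr_app (congr_arg Iso.hom (F.commShiftIso_add' h)) X
  rw [Functor.CommShift.isoAdd'_hom_app] at hadd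
  dsimp at hnat
  rw [shift_pureIso_hom] at hnat
  rw [Functor.map_comp, shift_pureIso_hom,
    ← cancel_mono ((shiftFunctorAdd' T 1 n' n h).inv.app X), assoc, assoc, hnat,
    ← cancel_epi ((F.commShiftIso n').hom.app (X⟦(1 : ℤ)⟧)),
    ← cancel_epi (F.map ((shiftFunctorAdd' T 1 n' n h).hom.app X))]
  simp only [Iso.hom_inv_id_app_assoc]
  rw [reassoc_of% hη', Iso.hom_inv_id_app, comp_id, ← reassoc_of% hadd,
    Iso.hom_inv_id_app_assoc]

/-- The inductive statement: an object `Z ∈ U[n-k,n]` has a top part `f : X ⟶ Z` with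
`X ∈ U[n,n]` and an isomorphism `F(Z) ≅ Z` compatible with `pureIso` along `f`; moreover
morphisms from `F(Z)` to `Σ(B)`, `B ∈ U[n+1,n+1]`, are determined by their restriction
along `F(f)`. The last two properties make the connecting morphism of the next extension
compatible with the isomorphism. -/
lemma exists_iso [F.IsTriangulated] (W : IsPreWeightStructure ge le)
    (hC : ∀ A B : T, A ∈ coreSet ge le → B ∈ coreSet ge le →
      ∀ k : ℕ, 1 ≤ k → ∀ f : A ⟶ B⟦-(k : ℤ)⟧, f = 0) (k : ℕ) :
    ∀ {n : ℤ} {Z : T}, Z ∈ interval ge le (n - k) n →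
      ∃ (X : T) (hX : X ∈ interval ge le n n) (f : X ⟶ Z) (φ : F.obj Z ≅ Z),
        F.map f ≫ φ.hom = (pureIso F η n X hX).hom ≫ f ∧
        ∀ B ∈ interval ge le (n + 1) (n + 1), ∀ g : F.obj Z ⟶ B⟦(1 : ℤ)⟧,
          F.map f ≫ g = 0 → g = 0 := by
  induction k with
  | zero =>
    intro n Z hZ
    have hZ' : Z ∈ interval ge le n n := by simpa using hZ
    exact ⟨Z, hZ', 𝟙 Z, pureIso F η n Z hZ', by simp, fun B _ g hg => by simpa using hg⟩
  | succ k ih =>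
    intro n Z hZ
    obtain ⟨X, Y, f, g, d, hX, hY, ht⟩ := exists_top_decomp W (by omega) hZ
    rw [show n - ((k + 1 : ℕ) : ℤ) = (n - 1) - k by push_cast; ring] at hY
    obtain ⟨X', hX', f', ψ, hψ, hinj⟩ := ih hY
    have hXs : X⟦(1 : ℤ)⟧ ∈ interval ge le (n - 1) (n - 1) :=
      ⟨(mem_shift_iff W.ge_iso X (by ring)).2 hX.1, (mem_shift_iff W.le_iso X (by ring)).2 hX.2⟩
    have hcomm : (F.map d ≫ (F.commShiftIso (1 : ℤ)).hom.app X) ≫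
        (pureIso F η n X hX).hom⟦(1 : ℤ)⟧' = ψ.hom ≫ d := by
      rw [assoc, ← pureIso_shift F η hη (by ring) hX hXs, ← sub_eq_zero]
      refine hinj X (by simpa using hX) _ ?_
      rw [Preadditive.comp_sub, sub_eq_zero, ← F.map_comp_assoc,
        pureIso_naturality F η hη hX' hXs, reassoc_of% hψ]
    have hFt := F.map_distinguished _ ht
    obtain ⟨b, hb₁, hb₂⟩ := complete_distinguished_triangle_morphism₂ _ _ hFt ht
      (pureIso F η n X hX).hom ψ.hom hcomm
    let Φ : F.mapTriangle.obj (Triangle.mk f g d) ⟶ Triangle.mk f g d :=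
      { hom₁ := (pureIso F η n X hX).hom
        hom₂ := b
        hom₃ := ψ.hom
        comm₁ := hb₁
        comm₂ := hb₂
        comm₃ := hcomm }
    have hb : IsIso b := isIso₂_of_isIso₁₃ Φ hFt ht
      (inferInstanceAs (IsIso (pureIso F η n X hX).hom)) (inferInstanceAs (IsIso ψ.hom))
    refine ⟨X, hX, f, @asIso _ _ _ _ b hb, hb₁, fun B hB u hu => ?_⟩
    obtain ⟨(v : F.obj Y ⟶ B⟦(1 : ℤ)⟧), hv⟩ := Triangle.yoneda_exact₂ _ hFt u hu
    have hv₀ : v = 0 := by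
      rw [← cancel_epi ψ.inv, comp_zero]
      exact hom_zero W hC hB k (by omega) hY _
    exact hv.trans ((congrArg (F.map g ≫ ·) hv₀).trans comp_zero)

end Functor

end PreWeight

/-- Proposition 5.2: if `Hom(C, Σ^{-k}(C)) = 0` for `k ≥ 1` and
`(F, ω)` is a triangle endofunctor which is isomorphic to the identity on the core
(via isomorphisms `η_A : F(A) ≅ A` natural in `A ∈ C`), then `F(X) ≅ X` for every
`X ∈ U_b`. -/
theorem preWeightStructure_triangleFunctor_fixes_bounded_objects
    {ge le : Set T} (W : IsPreWeightStructure ge le)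
    (hC : ∀ A B : T, A ∈ coreSet ge le → B ∈ coreSet ge le →
      ∀ k : ℕ, 1 ≤ k → ∀ f : A ⟶ B⟦-(k : ℤ)⟧, f = 0)
    (F : T ⥤ T) [F.CommShift ℤ] [F.IsTriangulated]
    (η : ∀ (A : T), A ∈ coreSet ge le → (F.obj A ≅ A))
    (hη : ∀ (A B : T) (hA : A ∈ coreSet ge le) (hB : B ∈ coreSet ge le) (f : A ⟶ B),
      F.map f ≫ (η B hB).hom = (η A hA).hom ≫ f) :
    ∀ X ∈ boundedSet ge le, Nonempty (F.obj X ≅ X) := by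
  rintro X ⟨m, n, hmn, hX⟩
  obtain ⟨k, hk⟩ := Int.le.dest hmn
  obtain rfl : m = n - k := by omega
  obtain ⟨_, _, _, φ, _⟩ := PreWeight.exists_iso F η hη W hC k hX
  exact ⟨φ⟩
end
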